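/- Let d ≥ 1, 1 < p < 2, s ∈ (0,1), and let 1 ≤ k ≤ d be an integer. Assume α, β ∈ ℝ satisfy α, β, α+β ∈ (−k, sp). Then for every u ∈ C_c^1(ℝ^d) when sp < k+α+β, and for every u ∈ C_c^1(ℝ^d \ K) when sp > k+α+β, setting v(x) := |x_k|^{(k+α+β−sp)/p} u(x), one has: ∫_{ℝ^d} ∫_{ℝ^d} |u(x)−u(y)|^p |x−y|^{−d−sp} |x_k|^α |y_k|^β dx dy − 𝒞(d,s,p,k,α,β) ∫_{ℝ^d} |u(x)|^p |x_k|^{α+β−sp} dx ≥ C_p ∫_{ℝ^d} ∫_{ℝ^d} (v(x)^{⟨p/2⟩} − v(y)^{⟨p/2⟩})² |x−y|^{−d−sp} W(x,y) |x_k|^α |y_k|^β dx dy, where C_p := max{(p−1)/p, p(p−1)/2} and W(x,y) := min{|x_k|^{−(k+α+β−sp)/p}, |y_k|^{−(k+α+β−sp)/p}} · (max{|x_k|^{−(k+α+β−sp)/p}, |y_k|^{−(k+α+β−sp)/p}})^{p−1}. -/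

import Mathlib

/-!
Put `γ = (k + α + β - sp) / p`, `w(x) = |x_k|^{-γ}` and `u = w v`. The function `w` plays the role
of a ground state, and the inequality is the `L^p` ground state representation with a remainder.

The only inequality of substance is pointwise (`pw_main`): for `0 < w₂ ≤ w₁` and real `X`, `Y`,
`(w₁ - w₂)^{p-1} (w₁ |X|^p - w₂ |Y|^p) + C w₂ w₁^{p-1} (X^{⟨p/2⟩} - Y^{⟨p/2⟩})² ≤ |w₁ X - w₂ Y|^p`.
By homogeneity it reduces to one variable; for equal signs it holds even with `C = p - 1`, while
opposite signs are where both values `(p-1)/p` and `p(p-1)/2` are compared with `2^{p-2}`.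

Everything is integrated against the kernel `|x - y|^{-d-sp}` with weight `|x_k|^α |y_k|^β`. As the
integrands are symmetric, the double integral lives on `|y_k| < |x_k|` with the weight symmetrised
(`Dint_eq_Jint`). The two terms coming from `(w₁ - w₂)^{p-1} (w₁ |X|^p - w₂ |Y|^p)` are separately
divergent in general near `|x_k| = |y_k|`, so one first cuts off to `|y_k| < τ |x_k|` with `τ < 1`.
There each of them can be computed by Tonelli, integrating out the variable on which `u` does not
depend: integrate over the orthogonal complement (which yields the quotient of Gamma functions),
then in polar coordinates on `ℝ^k`, and scale by homogeneity. Both are a one-dimensional integral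
times `∫ |u|^p |x_k|^{α+β-sp}` (`light_fst`, `light_snd`). Their difference is the integral over
`(0, τ)` of the density of `𝒞₁` (`rad_balance_neg`, `rad_balance_pos`), and the smaller of the two
is finite under the hypotheses on `α` and `β`, so it may be subtracted (`core_trunc`). Monotone
convergence as `τ → 1` gives the inequality between `ℝ≥0∞`-valued integrals (`core_ineq`).

The passage to Bochner integrals needs the energy and the weighted `L^p` integral of `u` to be
finite (`energy_finite`, `Iint_finite`); the remainder is then finite by the inequality itself. For
the constant, only `𝒞 ≤` the extended-real quantity is required (`CC_le`). It holds whether or not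
the integrals defining `Φ` and `𝒞₁` converge, since a divergent Bochner integral is `0`.
-/

open MeasureTheory Real Set Filter Topology

noncomputable section

/-- Surface measure `|𝕊^m|` of the unit sphere `𝕊^m ⊆ ℝ^(m+1)`. -/
def sphereVol (m : ℕ) : ℝ :=
  2 * Real.pi ^ (((m : ℝ) + 1) / 2) / Real.Gamma (((m : ℝ) + 1) / 2)

/-- The profile function `Φ_{d,s,p}(r)`. -/
def Phi (d : ℕ) (s p r : ℝ) : ℝ :=
  if d = 1 then (1 - r) ^ (-1 - s * p) + (1 + r) ^ (-1 - s * p)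
  else sphereVol (d - 2) *
    ∫ t in Icc (-1 : ℝ) 1,
      (1 - t ^ 2) ^ (((d : ℝ) - 3) / 2) * (1 - 2 * t * r + r ^ 2) ^ (-(((d : ℝ) + s * p) / 2))

/-- The sharp constant `𝒞₁(d,s,p,α,β)` for the weighted fractional Hardy inequality with
point singularity. -/
def C1 (d : ℕ) (s p a b : ℝ) : ℝ :=
  ∫ r in Ioo (0 : ℝ) 1,
    r ^ (s * p - 1) * (r ^ (-a) + r ^ (-b)) *
      |1 - r ^ (((d : ℝ) + a + b - s * p) / p)| ^ p * Phi d s p r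

/-- The sharp constant `𝒞(d,s,p,k,α,β)` for the weighted fractional Hardy inequality with
singularity on a flat submanifold of codimension `k`. -/
def CC (d k : ℕ) (s p a b : ℝ) : ℝ :=
  Real.pi ^ (((d : ℝ) - (k : ℝ)) / 2) * Real.Gamma (((k : ℝ) + s * p) / 2) /
    Real.Gamma (((d : ℝ) + s * p) / 2) * C1 k s p a b

/-- `|x_k|`: the Euclidean norm of the vector of the first `k` coordinates of `x ∈ ℝ^d`. -/
def pnorm (d k : ℕ) (x : EuclideanSpace ℝ (Fin d)) : ℝ :=
  Real.sqrt (∑ i : Fin d, if (i : ℕ) < k then x i ^ 2 else 0)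

/-- The French power `a^{⟨t⟩} := |a|^t sgn(a)`. -/
def frenchPow (a t : ℝ) : ℝ := |a| ^ t * Real.sign a

/-! ### Pointwise inequalities in one real variable -/

lemma rpow_one_sub_le {t D : ℝ} (ht1 : t ≤ 1) (hD0 : 0 ≤ D) (hD1 : D ≤ 1) :
    (1 - t) ^ D ≤ 1 - D * t := by
  have := rpow_one_add_le_one_add_mul_self (s := -t) (by linarith) hD0 hD1
  rw [← sub_eq_add_neg] at this
  linarith

/-- `t ↦ 1 - (1-t)^D` is star-shaped (being convex and zero at the origin). -/
lemma starshaped {t c D : ℝ} (ht1 : t ≤ 1) (hc0 : 0 ≤ c) (hc1 : c ≤ 1)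
    (hD0 : 0 ≤ D) (hD1 : D ≤ 1) :
    1 - (1 - c * t) ^ D ≤ c * (1 - (1 - t) ^ D) := by
  have h := (Real.concaveOn_rpow hD0 hD1).2 (show (1 : ℝ) ∈ Ici 0 by simp)
    (show 1 - t ∈ Ici (0 : ℝ) from sub_nonneg.2 ht1) (sub_nonneg.2 hc1) hc0 (by ring)
  simp only [smul_eq_mul, Real.one_rpow, mul_one] at h
  rw [show 1 - c + c * (1 - t) = 1 - c * t by ring] at h
  linarith

/-- As a function of `z` the right-hand side vanishes at `z = 1`; by `starshaped` its derivative is nonpositive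
on `(0, 1]` and nonnegative on `[1, 1/t]`. Applied with `z = 1/a` and `D = p - 1` this is the
one-variable pointwise inequality for `a ≥ t`. -/
lemma H_nonneg {t z D : ℝ} (ht0 : 0 < t) (ht1 : t ≤ 1) (hz0 : 0 < z) (hz1 : t * z ≤ 1)
    (hD0 : 0 < D) (hD1 : D < 1) :
    0 ≤ (1 - t * z) ^ (D + 1) - (1 - t) ^ D * (1 - t * z ^ (D + 1))
      - t * (z ^ (D + 1) + D - (D + 1) * z) := by
  set H : ℝ → ℝ := fun z => (1 - t * z) ^ (D + 1) - (1 - t) ^ D * (1 - t * z ^ (D + 1))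
      - t * (z ^ (D + 1) + D - (D + 1) * z) with hH
  have hder : ∀ z, 0 < z → t * z < 1 → HasDerivAt H
      ((D + 1) * t * ((1 - (1 - t * z) ^ D) - (1 - (1 - t) ^ D) * z ^ D)) z := by
    intro z hz0 hz1
    have h1 : HasDerivAt (fun z : ℝ => (1 - t * z) ^ (D + 1)) _ z :=
      (((hasDerivAt_id z).const_mul t).const_sub 1).rpow_const (p := D + 1) (Or.inr (by linarith))
    have h2 : HasDerivAt (fun z : ℝ => z ^ (D + 1)) _ z :=
      (hasDerivAt_id z).rpow_const (p := D + 1) (Or.inr (by linarith))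
    have h3 := (h1.sub (((h2.const_mul t).const_sub 1).const_mul ((1 - t) ^ D))).sub
      (((h2.add_const D).sub ((hasDerivAt_id z).const_mul (D + 1))).const_mul t)
    refine h3.congr_deriv ?_
    simp only [id, add_sub_cancel_right]
    ring
  have hcont : Continuous H := by
    have a1 : Continuous fun z : ℝ => (1 - t * z) ^ (D + 1) :=
      (by fun_prop : Continuous fun z : ℝ => 1 - t * z).rpow_const (fun _ => Or.inr (by linarith))
    have a2 : Continuous fun z : ℝ => z ^ (D + 1) :=
      continuous_id.rpow_const (fun _ => Or.inr (by linarith))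
    fun_prop
  have hone : H 1 = 0 := by
    simp only [hH, mul_one, Real.one_rpow]
    rcases eq_or_lt_of_le ht1 with h | h
    · subst h; simp [Real.zero_rpow hD0.ne', Real.zero_rpow (by linarith : D + 1 ≠ 0)]; ring
    · rw [Real.rpow_add_one (by linarith)]; ring
  have hφ0 : 0 ≤ 1 - (1 - t) ^ D := by
    have := rpow_one_sub_le ht1 hD0.le hD1.le
    nlinarith
  change 0 ≤ H z
  rw [← hone]
  rcases le_total z 1 with hz | hz
  · refine antitoneOn_of_deriv_nonpos (convex_Icc 0 1) hcont.continuousOn ?_ ?_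
      ⟨hz0.le, hz⟩ ⟨zero_le_one, le_refl _⟩ hz
    · intro y hy
      rw [interior_Icc] at hy
      exact (hder y hy.1 (by nlinarith [hy.1, hy.2])).differentiableAt.differentiableWithinAt
    · intro y hy
      rw [interior_Icc] at hy
      rw [(hder y hy.1 (by nlinarith [hy.1, hy.2])).deriv]
      have h1 := starshaped ht1 hy.1.le hy.2.le hD0.le hD1.le
      have h2 : y ≤ y ^ D := by
        simpa using Real.rpow_le_rpow_of_exponent_ge hy.1 hy.2.le hD1.le
      rw [mul_comm y t] at h1
      have h3 := mul_le_mul_of_nonneg_right h2 hφ0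
      refine mul_nonpos_of_nonneg_of_nonpos (by positivity) (by linarith)
  · refine monotoneOn_of_deriv_nonneg (convex_Icc 1 (1 / t)) hcont.continuousOn ?_ ?_
      ⟨le_refl _, ?_⟩ ⟨hz, ?_⟩ hz
    · intro y hy
      rw [interior_Icc] at hy
      refine (hder y (by linarith [hy.1]) ?_).differentiableAt.differentiableWithinAt
      have := hy.2; rw [lt_div_iff₀ ht0] at this; linarith
    · intro y hy
      rw [interior_Icc] at hy
      have hy2 : t * y < 1 := by have := hy.2; rw [lt_div_iff₀ ht0] at this; linarith
      have hy0 : 0 < y := by linarith [hy.1]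
      rw [(hder y hy0 hy2).deriv]
      have h1 := starshaped (t := t * y) (c := 1 / y) hy2.le (by positivity)
        (by rw [div_le_one hy0]; exact hy.1.le) hD0.le hD1.le
      rw [show 1 / y * (t * y) = t by field_simp, one_div, inv_mul_eq_div, le_div_iff₀ hy0] at h1
      have h2 : y ^ D ≤ y := by
        simpa using Real.rpow_le_rpow_of_exponent_le hy.1.le hD1.le
      have h3 := mul_le_mul_of_nonneg_left h2 hφ0
      refine mul_nonneg (by positivity) (by linarith)
    · rw [le_div_iff₀ ht0]; linarith
    · rw [le_div_iff₀ ht0]; linarith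

/-- Positive case with `t ≤ a`: sharp constant `p - 1`. -/
lemma pw_pos_ge {t a p : ℝ} (ht0 : 0 < t) (ht1 : t ≤ 1) (hta : t ≤ a) (hp1 : 1 < p) (hp2 : p < 2) :
    (1 - t) ^ (p - 1) * (a ^ p - t) + (p - 1) * t * (a ^ (p / 2) - 1) ^ 2 ≤ (a - t) ^ p := by
  have ha : 0 < a := by linarith
  have h := H_nonneg (z := a⁻¹) (D := p - 1) ht0 ht1 (by positivity)
    (by rw [← div_eq_mul_inv]; exact (div_le_one ha).2 hta) (by linarith) (by linarith)
  rw [sub_add_cancel] at h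
  have hap : 0 < a ^ p := by positivity
  have e1 : a ^ p * (1 - t * a⁻¹) ^ p = (a - t) ^ p := by
    rw [← Real.mul_rpow ha.le]
    · congr 1; field_simp
    · rw [← div_eq_mul_inv, sub_nonneg]; exact (div_le_one ha).2 hta
  have e2 : a ^ p * (a⁻¹) ^ p = 1 := by
    rw [← Real.mul_rpow ha.le (by positivity), mul_inv_cancel₀ ha.ne', Real.one_rpow]
  have e3 : a ^ p * a⁻¹ = a ^ (p - 1) := by rw [Real.rpow_sub_one ha.ne', div_eq_mul_inv]
  have e4 : (a ^ (p / 2)) ^ 2 = a ^ p := by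
    rw [← Real.rpow_natCast, ← Real.rpow_mul ha.le]; norm_num
  -- weighted AM-GM: `a^(p-1) = 1^((2-p)/p) * (a^(p/2))^(2(p-1)/p)`
  have amgm : p * a ^ (p - 1) ≤ (2 - p) + 2 * (p - 1) * a ^ (p / 2) := by
    have := Real.geom_mean_le_arith_mean2_weighted (w₁ := (2 - p) / p) (w₂ := 2 * (p - 1) / p)
      (p₁ := 1) (p₂ := a ^ (p / 2)) (div_nonneg (by linarith) (by linarith))
      (div_nonneg (by linarith) (by linarith)) (by norm_num) (by positivity)
      (by field_simp; ring)
    rw [Real.one_rpow, one_mul, ← Real.rpow_mul ha.le,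
      show p / 2 * (2 * (p - 1) / p) = p - 1 by field_simp] at this
    have hpp : 0 < p := by linarith
    calc p * a ^ (p - 1) ≤ p * ((2 - p) / p * 1 + 2 * (p - 1) / p * a ^ (p / 2)) :=
          mul_le_mul_of_nonneg_left this hpp.le
      _ = _ := by field_simp
  have h' := mul_nonneg hap.le h
  have e5 : a ^ p * ((1 - t * a⁻¹) ^ p - (1 - t) ^ (p - 1) * (1 - t * a⁻¹ ^ p)
      - t * (a⁻¹ ^ p + (p - 1) - p * a⁻¹)) =
      (a ^ p * (1 - t * a⁻¹) ^ p) - (1 - t) ^ (p - 1) * (a ^ p - t * (a ^ p * a⁻¹ ^ p))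
      - t * (a ^ p * a⁻¹ ^ p + (p - 1) * a ^ p - p * (a ^ p * a⁻¹)) := by ring
  rw [e5, e1, e2, e3] at h'
  have h6 := mul_le_mul_of_nonneg_left amgm ht0.le
  have e6 : (p - 1) * t * (a ^ (p / 2) - 1) ^ 2 =
      (p - 1) * t * a ^ p - 2 * (p - 1) * t * a ^ (p / 2) + (p - 1) * t := by rw [← e4]; ring
  rw [e6]
  nlinarith

/-- Positive case with `a ≤ t`: the lower bound is affine in `t`, so the endpoints suffice. -/
lemma pw_pos_le {t a p : ℝ} (ha : 0 ≤ a) (ht0 : 0 < t) (ht1 : t ≤ 1) (hta : a ≤ t)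
    (hp1 : 1 < p) (hp2 : p < 2) :
    (1 - t) ^ (p - 1) * (a ^ p - t) + (p - 1) * t * (a ^ (p / 2) - 1) ^ 2 ≤ (t - a) ^ p := by
  have q1 : (t - a) ^ 2 ≤ (t - a) ^ p := by
    rw [← Real.rpow_two]
    exact Real.rpow_le_rpow_of_exponent_ge' (by linarith) (by linarith) (by linarith) hp2.le
  have q2 : 1 - t ≤ (1 - t) ^ (p - 1) := by
    simpa using Real.rpow_le_rpow_of_exponent_ge' (x := 1 - t) (y := 1) (z := p - 1) (by linarith)
      (by linarith) (by linarith) (by linarith)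
  have q3 : a ^ p ≤ a := by
    simpa using Real.rpow_le_rpow_of_exponent_ge' (x := a) (y := p) (z := 1) ha
      (by linarith) (by linarith) (by linarith)
  have q4 : a ≤ a ^ (p / 2) := by
    simpa using Real.rpow_le_rpow_of_exponent_ge' (x := a) (y := 1) (z := p / 2) ha
      (by linarith) (by linarith) (by linarith)
  have q5 : a ^ (p / 2) ≤ 1 := Real.rpow_le_one ha (by linarith) (by linarith)
  have q6 : a ^ (p - 1) ≤ 1 - (p - 1) * (1 - a) := by
    simpa using rpow_one_sub_le (t := 1 - a) (D := p - 1) (by linarith) (by linarith)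
      (by linarith)
  have q7 : a ^ p = a * a ^ (p - 1) := by
    rcases ha.eq_or_lt with h | h
    · rw [← h]; simp [Real.zero_rpow (by linarith : p ≠ 0)]
    · rw [Real.rpow_sub_one h.ne']; field_simp
  have q8 : (a ^ (p / 2) - 1) ^ 2 ≤ (1 - a) ^ 2 := by nlinarith
  set S := (a ^ (p / 2) - 1) ^ 2
  have hS : 0 ≤ S := sq_nonneg _
  set X := a ^ p
  have r1 : (1 - t) * (t - X) ≤ (1 - t) ^ (p - 1) * (t - X) :=
    mul_le_mul_of_nonneg_right q2 (by linarith)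
  -- the affine function at `t = a` and `t = 1`
  have v1 : (p - 1) * S ≤ (1 - a) ^ 2 := by nlinarith
  have va : (p - 1) * a * S ≤ (1 - a) * (a - X) := by
    have : a * (1 - a) * ((p - 1) * (1 - a)) ≤ a * (1 - a) * (1 - a ^ (p - 1)) :=
      mul_le_mul_of_nonneg_left (by linarith) (mul_nonneg ha (by linarith))
    have h2 : (p - 1) * a * S ≤ (p - 1) * a * (1 - a) ^ 2 :=
      mul_le_mul_of_nonneg_left q8 (mul_nonneg (by linarith) ha)
    rw [q7]; nlinarith
  have key : (p - 1) * t * S ≤ (t - a) ^ 2 + (1 - t) * (t - X) := by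
    rcases (hta.trans ht1).eq_or_lt with h | h
    · have : t = 1 := by linarith
      subst this; nlinarith
    · have hpos : 0 < 1 - a := by linarith
      have i1 := mul_le_mul_of_nonneg_left v1 (sub_nonneg.2 hta)
      have i2 := mul_le_mul_of_nonneg_left va (sub_nonneg.2 ht1)
      have : (1 - a) * ((p - 1) * t * S) ≤ (1 - a) * ((t - a) ^ 2 + (1 - t) * (t - X)) := by
        nlinarith
      exact le_of_mul_le_mul_left this hpos
  nlinarith

lemma kappa_ge {q : ℝ} : q ≤ (2 : ℝ) ^ (q - 1) ∨ 1 < q := by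
  by_cases h : 1 < q
  · exact Or.inr h
  · left
    rw [Real.rpow_def_of_pos (by norm_num)]
    have h1 := Real.add_one_le_exp (Real.log 2 * (q - 1))
    have h2 := Real.log_two_lt_d9
    push Not at h
    nlinarith

/-- Midpoint concavity of `x ↦ x^q`. -/
lemma half_add {q b t : ℝ} (hq0 : 0 ≤ q) (hq1 : q ≤ 1) (hb : 0 ≤ b) (ht : 0 ≤ t) :
    (2 : ℝ) ^ (q - 1) * (b ^ q + t ^ q) ≤ (b + t) ^ q := by
  have h := (Real.concaveOn_rpow hq0 hq1).2 (mem_Ici.2 hb) (mem_Ici.2 ht)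
    (by norm_num : (0 : ℝ) ≤ 1 / 2) (by norm_num : (0 : ℝ) ≤ 1 / 2) (by norm_num)
  simp only [smul_eq_mul] at h
  rw [← mul_add, ← mul_add, Real.mul_rpow (by norm_num) (by linarith)] at h
  have e : (2 : ℝ) ^ q * (1 / 2) ^ q = 1 := by
    rw [← Real.mul_rpow (by norm_num) (by norm_num)]; norm_num
  rw [Real.rpow_sub_one (by norm_num)]
  have h2 := mul_le_mul_of_nonneg_left h (by positivity : (0 : ℝ) ≤ 2 ^ q)
  calc (2 : ℝ) ^ q / 2 * (b ^ q + t ^ q) = 2 ^ q * (1 / 2 * (b ^ q + t ^ q)) := by ring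
    _ ≤ _ := h2
    _ = (2 ^ q * (1 / 2) ^ q) * (b + t) ^ q := by ring
    _ = _ := by rw [e, one_mul]

/-- Obtained by integrating `half_add` (with `q = p - 1`) in `t`. -/
lemma add_rpow_lower {p b t : ℝ} (hp1 : 1 < p) (hp2 : p < 2) (hb : 0 < b) (ht : 0 ≤ t) :
    b ^ p + (2 : ℝ) ^ (p - 2) * (p * b ^ (p - 1) * t + t ^ p) ≤ (b + t) ^ p := by
  set κ := (2 : ℝ) ^ (p - 2) with hκ
  set G : ℝ → ℝ := fun t => (b + t) ^ p - κ * (p * b ^ (p - 1) * t + t ^ p) with hG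
  have hder : ∀ t, 0 < t → HasDerivAt G
      (p * ((b + t) ^ (p - 1) - κ * (b ^ (p - 1) + t ^ (p - 1)))) t := by
    intro t ht
    have h1 : HasDerivAt (fun t : ℝ => (b + t) ^ p) _ t :=
      ((hasDerivAt_id t).const_add b).rpow_const (p := p) (Or.inr hp1.le)
    have h2 : HasDerivAt (fun t : ℝ => t ^ p) _ t :=
      (hasDerivAt_id t).rpow_const (p := p) (Or.inr hp1.le)
    refine (h1.sub ((((hasDerivAt_id t).const_mul (p * b ^ (p - 1))).add h2).const_mul
      κ)).congr_deriv ?_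
    simp only [id]; ring
  have hcont : Continuous G := by
    have a1 : Continuous fun z : ℝ => (b + z) ^ p :=
      (by fun_prop : Continuous fun z : ℝ => b + z).rpow_const (fun _ => Or.inr (by linarith))
    have a2 : Continuous fun z : ℝ => z ^ p :=
      continuous_id.rpow_const (fun _ => Or.inr (by linarith))
    fun_prop
  have h := monotoneOn_of_deriv_nonneg (convex_Ici 0) hcont.continuousOn ?_ ?_
      (self_mem_Ici) (mem_Ici.2 ht) ht
  · simp only [hG, add_zero, mul_zero, Real.zero_rpow (by linarith : p ≠ 0), sub_zero] at h
    linarith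
  · intro y hy
    rw [interior_Ici] at hy
    exact (hder y hy).differentiableAt.differentiableWithinAt
  · intro y hy
    rw [interior_Ici] at hy
    rw [(hder y hy).deriv]
    have := half_add (q := p - 1) (b := b) (t := y) (by linarith) (by linarith) hb.le (le_of_lt hy)
    rw [show p - 1 - 1 = p - 2 by ring] at this
    exact mul_nonneg (by linarith) (by linarith)

/-- The residual one-variable inequality for opposite signs. -/
lemma pw_neg_const {p b : ℝ} (hp1 : 1 < p) (hp2 : p < 2) (hb : 0 < b) {C : ℝ}
    (hC : C = (p - 1) / p ∨ C = p * (p - 1) / 2) :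
    C * (b ^ (p / 2) + 1) ^ 2 ≤ (2 : ℝ) ^ (p - 2) * (p * b ^ (p - 1) + 1) + (p - 1) * b ^ p := by
  set κ := (2 : ℝ) ^ (p - 2) with hκ
  have k1 : p - 1 ≤ κ := by
    rcases kappa_ge (q := p - 1) with h | h
    · rwa [show p - 1 - 1 = p - 2 by ring] at h
    · linarith
  have k2 : 1 / 2 ≤ κ := by
    have := Real.rpow_le_rpow_of_exponent_le (x := 2) (by norm_num) (by linarith : (-1 : ℝ) ≤ p - 2)
    rw [Real.rpow_neg_one] at this
    linarith
  set X := b ^ (p / 2) with hX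
  have hX0 : 0 < X := by positivity
  have e4 : b ^ p = X ^ 2 := by
    rw [hX, ← Real.rpow_natCast, ← Real.rpow_mul hb.le]; norm_num
  have hY0 : 0 < b ^ (p - 1) := by positivity
  rw [e4]
  rcases hC with rfl | rfl
  · have hC0 : (p - 1) / p * p = p - 1 := by field_simp
    set C := (p - 1) / p
    have hCpos : 0 < C := by by_contra h; push Not at h; nlinarith
    rcases le_total b 1 with hb1 | hb1
    · have y1 : X ≤ b ^ (p - 1) :=
        Real.rpow_le_rpow_of_exponent_ge hb hb1 (by linarith)
      -- `4 (p-1) ≤ p²`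
      have c1 : 2 * C ≤ p / 2 := by
        have : 2 * C * p ≤ p / 2 * p := by nlinarith [sq_nonneg (p - 2)]
        exact le_of_mul_le_mul_right this (by linarith)
      have c2 : C ≤ 1 / 2 := by nlinarith
      have c3 : C ≤ p - 1 := by nlinarith
      have z1 : p / 2 * b ^ (p - 1) ≤ κ * (p * b ^ (p - 1)) := by
        have : (1 / 2) * (p * b ^ (p - 1)) ≤ κ * (p * b ^ (p - 1)) :=
          mul_le_mul_of_nonneg_right k2 (by positivity)
        linarith
      have z2 : 2 * C * X ≤ p / 2 * b ^ (p - 1) := by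
        calc 2 * C * X ≤ 2 * C * b ^ (p - 1) := mul_le_mul_of_nonneg_left y1 (by linarith)
          _ ≤ _ := mul_le_mul_of_nonneg_right c1 hY0.le
      nlinarith [mul_nonneg (sub_nonneg.2 c3) (sq_nonneg X)]
    · have y1 : 1 ≤ b ^ (p - 1) := Real.one_le_rpow hb1 (by linarith)
      have z1 : (1 / 2) * (p * 1 + 1) ≤ κ * (p * b ^ (p - 1) + 1) := by
        gcongr
      have z2 : p * (C * (X + 1) ^ 2) ≤ p * ((1 / 2) * (p * 1 + 1) + (p - 1) * X ^ 2) := by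
        have : p * (C * (X + 1) ^ 2) = (p - 1) * (X + 1) ^ 2 := by rw [← hC0]; ring
        rw [this]
        nlinarith [sq_nonneg ((p - 1) * X - 1)]
      have := le_of_mul_le_mul_left z2 (by linarith)
      linarith
  · -- with `X = b^(p/2)` one has `b^(p-1) = X * exp (-(2-p)/p * log X)`
    have y1 : b ^ (p - 1) = X * Real.exp (-((2 - p) / p) * Real.log X) := by
      have : X = Real.exp (Real.log X) := (Real.exp_log hX0).symm
      nth_rewrite 1 [this]
      rw [← Real.exp_add, hX, Real.log_rpow hb, Real.rpow_def_of_pos hb]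
      congr 1; field_simp; ring
    have y2 : X * (1 - (2 - p) / p * Real.log X) ≤ b ^ (p - 1) := by
      rw [y1]
      refine mul_le_mul_of_nonneg_left ?_ hX0.le
      have := Real.add_one_le_exp (-((2 - p) / p) * Real.log X)
      linarith
    have y3 : p * X - (2 - p) * (X * Real.log X) ≤ p * b ^ (p - 1) := by
      have := mul_le_mul_of_nonneg_left y2 (by linarith : 0 ≤ p)
      have e : p * (X * (1 - (2 - p) / p * Real.log X)) = p * X - (2 - p) * (X * Real.log X) := by
        field_simp
      linarith
    have y4 : Real.log X ≤ X / 2 := by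
      have h1 := Real.log_le_sub_one_of_pos (Real.sqrt_pos.2 hX0)
      rw [Real.log_sqrt hX0.le] at h1
      nlinarith [sq_nonneg (Real.sqrt X - 2), Real.sq_sqrt hX0.le]
    have y5 : X * Real.log X ≤ X ^ 2 / 2 := by nlinarith
    have z1 : (p - 1) * (p * b ^ (p - 1) + 1) ≤ κ * (p * b ^ (p - 1) + 1) :=
      mul_le_mul_of_nonneg_right k1 (by positivity)
    have z2 : (p - 1) * (p * (X + 1) ^ 2 / 2) ≤ (p - 1) * ((p * b ^ (p - 1) + 1) + X ^ 2) := by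
      refine mul_le_mul_of_nonneg_left ?_ (by linarith)
      nlinarith [mul_le_mul_of_nonneg_left y5 (by linarith : 0 ≤ 2 - p)]
    nlinarith

/-- The one-variable pointwise inequality at the negative argument `a = -b`. -/
lemma pw_neg {t b p C : ℝ} (hb : 0 < b) (ht0 : 0 < t) (ht1 : t ≤ 1)
    (hp1 : 1 < p) (hp2 : p < 2) (hC : C = (p - 1) / p ∨ C = p * (p - 1) / 2) :
    (1 - t) ^ (p - 1) * (b ^ p - t) + C * t * (b ^ (p / 2) + 1) ^ 2 ≤ (b + t) ^ p := by
  have h1 := pw_neg_const hp1 hp2 hb hC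
  have h2 := add_rpow_lower hp1 hp2 hb ht0.le
  set κ := (2 : ℝ) ^ (p - 2)
  have k1 : κ ≤ 1 := Real.rpow_le_one_of_one_le_of_nonpos (by norm_num) (by linarith)
  have k0 : 0 < κ := by positivity
  have q2 : 1 - t ≤ (1 - t) ^ (p - 1) := by
    simpa using Real.rpow_le_rpow_of_exponent_ge' (x := 1 - t) (y := 1) (z := p - 1) (by linarith)
      (by linarith) (by linarith) (by linarith)
  have q3 : (1 - t) ^ (p - 1) ≤ 1 - (p - 1) * t :=
    rpow_one_sub_le ht1 (by linarith) (by linarith)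
  have q4 : t * t ≤ t ^ p := by
    have := Real.rpow_le_rpow_of_exponent_ge ht0 ht1 hp2.le
    rw [Real.rpow_two] at this; nlinarith
  have h3 := mul_le_mul_of_nonneg_left h1 ht0.le
  have h4 := mul_le_mul_of_nonneg_right q3 (by positivity : 0 ≤ b ^ p)
  have h5 := mul_le_mul_of_nonneg_right q2 ht0.le
  have h6 := mul_le_mul_of_nonneg_left q4 k0.le
  have h7 : κ * (t * (1 - t)) ≤ t * (1 - t) := by
    have : 0 ≤ t * (1 - t) := mul_nonneg ht0.le (by linarith)
    nlinarith
  nlinarith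

lemma C_le {p C : ℝ} (hp1 : 1 < p) (hp2 : p < 2) (hC : C = (p - 1) / p ∨ C = p * (p - 1) / 2) :
    C ≤ p - 1 := by
  rcases hC with rfl | rfl
  · rw [div_le_iff₀ (by linarith)]; nlinarith
  · nlinarith

/-! ### The homogeneous pointwise inequality -/

lemma frenchPow_neg (a t : ℝ) : frenchPow (-a) t = -frenchPow a t := by
  simp [frenchPow, Real.sign_neg]

lemma frenchPow_mul_pos {a b t : ℝ} (hb : 0 < b) : frenchPow (a * b) t = b ^ t * frenchPow a t := by
  have : Real.sign (a * b) = Real.sign a := by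
    rcases lt_trichotomy a 0 with h | h | h
    · rw [Real.sign_of_neg h, Real.sign_of_neg (mul_neg_of_neg_of_pos h hb)]
    · simp [h]
    · rw [Real.sign_of_pos h, Real.sign_of_pos (mul_pos h hb)]
  rw [frenchPow, frenchPow, this, abs_mul, abs_of_pos hb, Real.mul_rpow (abs_nonneg _) hb.le]
  ring

/-- The one-variable pointwise inequality, for all signs of `a`. -/
lemma pw_scalar {t a p C : ℝ} (ht0 : 0 < t) (ht1 : t ≤ 1)
    (hp1 : 1 < p) (hp2 : p < 2) (hC : C = (p - 1) / p ∨ C = p * (p - 1) / 2) :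
    (1 - t) ^ (p - 1) * (|a| ^ p - t) + C * t * (frenchPow a (p / 2) - 1) ^ 2 ≤ |a - t| ^ p := by
  rcases lt_or_ge a 0 with h | h
  · have h1 := pw_neg (b := -a) (by linarith) ht0 ht1 hp1 hp2 hC
    rw [abs_of_neg h, abs_of_neg (by linarith : a - t < 0), frenchPow, Real.sign_of_neg h,
      abs_of_neg h, show -(a - t) = -a + t by ring]
    convert h1 using 2
    ring
  · have e : frenchPow a (p / 2) = a ^ (p / 2) := by
      rcases h.eq_or_lt with h | h
      · rw [frenchPow, ← h, Real.zero_rpow (by linarith : p / 2 ≠ 0)]; simp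
      · rw [frenchPow, Real.sign_of_pos h, abs_of_pos h, mul_one]
    rw [e, abs_of_nonneg h]
    have hc : C * t * (a ^ (p / 2) - 1) ^ 2 ≤ (p - 1) * t * (a ^ (p / 2) - 1) ^ 2 := by
      have := C_le hp1 hp2 hC
      gcongr
    rcases le_total t a with h2 | h2
    · rw [abs_of_nonneg (by linarith)]
      linarith [pw_pos_ge ht0 ht1 h2 hp1 hp2]
    · rw [abs_of_nonpos (by linarith), neg_sub]
      linarith [pw_pos_le h ht0 ht1 h2 hp1 hp2]

/-- Homogeneous form of the pointwise inequality, i.e. with `u₁ = w₁ X`, `u₂ = w₂ Y`. -/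
lemma pw_main {p C w1 w2 : ℝ} (X Y : ℝ) (hw2 : 0 < w2) (hw : w2 ≤ w1)
    (hp1 : 1 < p) (hp2 : p < 2) (hC : C = (p - 1) / p ∨ C = p * (p - 1) / 2) :
    (w1 - w2) ^ (p - 1) * (w1 * |X| ^ p - w2 * |Y| ^ p)
      + C * (w2 * w1 ^ (p - 1)) * (frenchPow X (p / 2) - frenchPow Y (p / 2)) ^ 2
      ≤ |w1 * X - w2 * Y| ^ p := by
  have hw1 : 0 < w1 := hw2.trans_le hw
  obtain ⟨t, rfl⟩ : ∃ t, w2 = w1 * t := ⟨w2 / w1, by field_simp⟩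
  have ht0 : 0 < t := pos_of_mul_pos_right hw2 hw1.le
  have ht1 : t ≤ 1 := le_of_mul_le_mul_left (by linarith) hw1
  have hW : w1 ^ p = w1 * w1 ^ (p - 1) := by
    rw [Real.rpow_sub_one hw1.ne']; field_simp
  have e1 : (w1 - w1 * t) ^ (p - 1) = w1 ^ (p - 1) * (1 - t) ^ (p - 1) := by
    rw [← Real.mul_rpow hw1.le (by linarith)]; congr 1; ring
  -- it suffices to treat `w₁ = 1`
  suffices key : ∀ X Y : ℝ, (1 - t) ^ (p - 1) * (|X| ^ p - t * |Y| ^ p)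
      + C * t * (frenchPow X (p / 2) - frenchPow Y (p / 2)) ^ 2 ≤ |X - t * Y| ^ p by
    have h := mul_le_mul_of_nonneg_left (key X Y) (by positivity : 0 ≤ w1 ^ p)
    have e2 : |w1 * X - w1 * t * Y| ^ p = w1 ^ p * |X - t * Y| ^ p := by
      rw [← Real.mul_rpow hw1.le (abs_nonneg _)]
      congr 1
      rw [← abs_of_pos hw1, ← abs_mul, abs_of_pos hw1]; congr 1; ring
    rw [e2, e1]
    refine le_trans (le_of_eq ?_) h
    rw [hW]; ring
  have pos : ∀ X Y : ℝ, 0 < Y → (1 - t) ^ (p - 1) * (|X| ^ p - t * |Y| ^ p)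
      + C * t * (frenchPow X (p / 2) - frenchPow Y (p / 2)) ^ 2 ≤ |X - t * Y| ^ p := by
    intro X Y hY
    obtain ⟨a, rfl⟩ : ∃ a, X = a * Y := ⟨X / Y, by field_simp⟩
    have h := mul_le_mul_of_nonneg_left (pw_scalar (a := a) ht0 ht1 hp1 hp2 hC)
      (by positivity : 0 ≤ Y ^ p)
    have e3 : frenchPow Y (p / 2) = Y ^ (p / 2) := by
      rw [frenchPow, Real.sign_of_pos hY, abs_of_pos hY, mul_one]
    have e4 : (Y ^ (p / 2)) ^ 2 = Y ^ p := by
      rw [← Real.rpow_natCast, ← Real.rpow_mul hY.le]; norm_num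
    have e5 : |a * Y - t * Y| ^ p = Y ^ p * |a - t| ^ p := by
      rw [← sub_mul, abs_mul, abs_of_pos hY, Real.mul_rpow (abs_nonneg _) hY.le, mul_comm]
    rw [e5, e3, frenchPow_mul_pos hY, abs_mul, abs_of_pos hY, Real.mul_rpow (abs_nonneg _) hY.le]
    refine le_trans (le_of_eq ?_) h
    rw [← e4]; ring
  intro X Y
  rcases lt_trichotomy Y 0 with h | h | h
  · have := pos (-X) (-Y) (by linarith)
    rw [frenchPow_neg, frenchPow_neg, abs_neg, abs_neg] at this
    rw [← abs_neg (X - t * Y)]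
    convert this using 2
    · ring
    · ring_nf
  · subst h
    have h1 := rpow_one_sub_le ht1 (by linarith : 0 ≤ p - 1) (by linarith)
    have h2 := C_le hp1 hp2 hC
    have e : (frenchPow X (p / 2)) ^ 2 ≤ |X| ^ p := by
      have e4 : (|X| ^ (p / 2)) ^ 2 = |X| ^ p := by
        rw [← Real.rpow_natCast, ← Real.rpow_mul (abs_nonneg _)]; norm_num
      rw [frenchPow, mul_pow, e4]
      have : Real.sign X ^ 2 ≤ 1 := by
        rcases Real.sign_apply_eq X with h | h | h <;> rw [h] <;> norm_num
      have : 0 ≤ |X| ^ p := by positivity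
      nlinarith
    have hC0 : 0 ≤ C := by
      rcases hC with rfl | rfl
      · exact div_nonneg (by linarith) (by linarith)
      · nlinarith
    have z : frenchPow 0 (p / 2) = 0 := by simp [frenchPow]
    rw [z, abs_zero, Real.zero_rpow (by linarith : p ≠ 0), mul_zero, sub_zero, sub_zero,
      sub_zero]
    have hX : 0 ≤ |X| ^ p := by positivity
    have a1 := mul_le_mul_of_nonneg_right h1 hX
    have a2 := mul_le_mul_of_nonneg_left e (mul_nonneg hC0 ht0.le)
    have a3 := mul_le_mul_of_nonneg_right h2 (mul_nonneg ht0.le hX)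
    nlinarith
  · exact pos X Y h

/-! ### Radial integrals and a Beta-type integral -/

lemma sphereVol_nonneg (m : ℕ) : 0 ≤ sphereVol m := by
  have : 0 < Real.Gamma (((m : ℝ) + 1) / 2) := Real.Gamma_pos_of_pos (by positivity)
  unfold sphereVol; positivity

/-- Polar coordinates for radial functions. -/
lemma lintegral_fun_norm {E : Type*} [NormedAddCommGroup E] [InnerProductSpace ℝ E]
    [FiniteDimensional ℝ E] [MeasurableSpace E] [BorelSpace E] {n : ℕ}
    (hn : Module.finrank ℝ E = n + 1) {f : ℝ → ENNReal} (hf : Measurable f) :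
    ∫⁻ x : E, f ‖x‖ = ENNReal.ofReal (sphereVol n) *
      ∫⁻ y in Ioi (0 : ℝ), ENNReal.ofReal (y ^ n) * f y := by
  have hnt : Nontrivial E := Module.nontrivial_of_finrank_pos (R := ℝ) (by omega)
  have hconst : (volume : Measure E).toSphere univ = ENNReal.ofReal (sphereVol n) := by
    rw [Measure.toSphere_apply_univ, InnerProductSpace.volume_ball, hn]
    rw [ENNReal.ofReal_one, one_pow, one_mul, ← ENNReal.ofReal_natCast,
      ← ENNReal.ofReal_mul (by positivity)]
    congr 1
    unfold sphereVol
    have h0 : ((n:ℝ)+1)/2 ≠ 0 := by positivity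
    have hG : Real.Gamma (((n:ℝ)+1)/2) ≠ 0 := (Real.Gamma_pos_of_pos (by positivity)).ne'
    push_cast
    rw [Real.Gamma_add_one h0, Real.sqrt_eq_rpow, ← Real.rpow_natCast, ← Real.rpow_mul Real.pi_pos.le]
    push_cast
    rw [show (1/2:ℝ) * (n+1) = (n+1)/2 by ring]
    field_simp
  calc
    ∫⁻ x : E, f (‖x‖) = ∫⁻ x : ({(0)}ᶜ : Set E), f (‖x.1‖) ∂((volume : Measure E).comap (↑)) := by
      rw [lintegral_subtype_comap (measurableSet_singleton _).compl fun x ↦ f (‖x‖),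
        restrict_compl_singleton]
    _ = ∫⁻ x, f x.2 ∂(volume : Measure E).toSphere.prod (.volumeIoiPow (Module.finrank ℝ E - 1)) := by
      simpa using (volume : Measure E).measurePreserving_homeomorphUnitSphereProd.lintegral_comp_emb
        (Homeomorph.measurableEmbedding _) (f ∘ Subtype.val ∘ Prod.snd)
    _ = (volume : Measure E).toSphere univ *
          ∫⁻ x : Ioi (0 : ℝ), f x ∂.volumeIoiPow n := by
      rw [hn, Nat.add_sub_cancel, lintegral_prod _ (by fun_prop)]
      simp [mul_comm]
    _ = _ := by
      rw [hconst]
      congr 1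
      rw [Measure.volumeIoiPow, lintegral_withDensity_eq_lintegral_mul _ (by fun_prop) (by fun_prop)]
      rw [← lintegral_subtype_comap measurableSet_Ioi fun a ↦ ENNReal.ofReal (a ^ n) * f a]
      rfl

/-- The power `(A + |z|²)^{-q}` is written as a Gamma integral of Gaussians in `z`, which are then
integrated exactly. This is the source of the Gamma quotient in `𝒞`. -/
lemma lintegral_rpow_add_sq {V : Type*} [NormedAddCommGroup V] [InnerProductSpace ℝ V]
    [FiniteDimensional ℝ V] [MeasurableSpace V] [BorelSpace V] {A q : ℝ} (hA : 0 < A)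
    (hq : (Module.finrank ℝ V : ℝ) / 2 < q) :
    ∫⁻ z : V, ENNReal.ofReal ((A + ‖z‖ ^ 2) ^ (-q)) =
      ENNReal.ofReal (π ^ ((Module.finrank ℝ V : ℝ) / 2) *
        Real.Gamma (q - (Module.finrank ℝ V : ℝ) / 2) / Real.Gamma q) *
        ENNReal.ofReal (A ^ ((Module.finrank ℝ V : ℝ) / 2 - q)) := by
  set m : ℝ := (Module.finrank ℝ V : ℝ) with hm
  have hm0 : 0 ≤ m := by positivity
  have hq0 : 0 < q := by linarith
  have hGq := Real.Gamma_pos_of_pos hq0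
  -- the Gamma integral with parameter
  have hgam : ∀ {a r : ℝ}, 0 < a → 0 < r →
      ∫⁻ t in Ioi (0:ℝ), ENNReal.ofReal (t ^ (a-1) * Real.exp (-(r*t))) =
        ENNReal.ofReal ((1/r)^a * Real.Gamma a) := by
    intro a r ha hr
    rw [← Real.integral_rpow_mul_exp_neg_mul_Ioi ha hr, ofReal_integral_eq_lintegral_ofReal]
    · by_contra hcon
      have := integral_undef hcon
      rw [Real.integral_rpow_mul_exp_neg_mul_Ioi ha hr] at this
      have h1 : 0 < (1/r)^a * Real.Gamma a := mul_pos (by positivity) (Real.Gamma_pos_of_pos ha)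
      linarith
    · refine (ae_restrict_mem measurableSet_Ioi).mono fun t ht => ?_
      have : (0:ℝ) < t := ht
      positivity
  have hgauss : ∀ {b : ℝ}, 0 < b →
      ∫⁻ z : V, ENNReal.ofReal (Real.exp (-(b * ‖z‖^2))) = ENNReal.ofReal ((π/b)^(m/2)) := by
    intro b hb
    have h1 := GaussianFourier.integral_rexp_neg_mul_sq_norm (V := V) hb
    simp only [neg_mul] at h1
    rw [← h1, ofReal_integral_eq_lintegral_ofReal]
    · by_contra hcon
      have := integral_undef hcon
      rw [h1] at this
      have h1 : 0 < (π/b)^(m/2) := by positivity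
      linarith
    · exact Eventually.of_forall fun z => by positivity
  have key : ENNReal.ofReal (Real.Gamma q) * ∫⁻ z : V, ENNReal.ofReal ((A + ‖z‖ ^ 2) ^ (-q)) =
      ENNReal.ofReal (π ^ (m/2) * (A ^ (m/2 - q) * Real.Gamma (q - m/2))) := by
    calc _ = ∫⁻ z : V, ∫⁻ t in Ioi (0:ℝ),
              ENNReal.ofReal (t ^ (q-1) * Real.exp (-((A + ‖z‖^2)*t))) := by
            rw [← lintegral_const_mul' _ _ ENNReal.ofReal_ne_top]
            refine lintegral_congr fun z => ?_
            rw [hgam hq0 (by positivity), ← ENNReal.ofReal_mul hGq.le]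
            congr 1
            rw [one_div, Real.inv_rpow (by positivity), Real.rpow_neg (by positivity)]
            ring
      _ = ∫⁻ t in Ioi (0:ℝ), ∫⁻ z : V,
              ENNReal.ofReal (t ^ (q-1) * Real.exp (-((A + ‖z‖^2)*t))) := by
            refine lintegral_lintegral_swap ?_
            exact Measurable.aemeasurable (by unfold Function.uncurry; fun_prop)
      _ = ∫⁻ t in Ioi (0:ℝ), ENNReal.ofReal (π ^ (m/2)) *
            ENNReal.ofReal (t ^ ((q - m/2) - 1) * Real.exp (-(A*t))) := by
            refine setLIntegral_congr_fun measurableSet_Ioi fun t ht => ?_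
            have ht : (0:ℝ) < t := ht
            have : ∀ z : V, ENNReal.ofReal (t ^ (q-1) * Real.exp (-((A + ‖z‖^2)*t))) =
              ENNReal.ofReal (t ^ (q-1) * Real.exp (-(A*t))) *
                ENNReal.ofReal (Real.exp (-(t * ‖z‖^2))) := by
              intro z
              rw [← ENNReal.ofReal_mul (by positivity), mul_assoc, ← Real.exp_add]
              congr 3; ring
            simp only [this]
            rw [lintegral_const_mul' _ _ ENNReal.ofReal_ne_top, hgauss ht,
              ← ENNReal.ofReal_mul (by positivity), ← ENNReal.ofReal_mul (by positivity)]
            congr 1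
            rw [Real.div_rpow Real.pi_pos.le ht.le, show q - m/2 - 1 = (q-1) - m/2 by ring,
              Real.rpow_sub ht (q-1) (m/2)]
            ring
      _ = _ := by
            rw [lintegral_const_mul' _ _ ENNReal.ofReal_ne_top, hgam (by linarith) hA,
              ← ENNReal.ofReal_mul (by positivity)]
            congr 3
            rw [one_div, Real.inv_rpow hA.le, ← Real.rpow_neg hA.le]
            congr 1; ring
  have hG2 : 0 < Real.Gamma (q - m/2) := Real.Gamma_pos_of_pos (by linarith)
  rw [← ENNReal.ofReal_mul (by positivity)]
  have h2 : ENNReal.ofReal (Real.Gamma q) ≠ 0 := by simpa using hGq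
  rw [← ENNReal.mul_right_inj h2 ENNReal.ofReal_ne_top, key, ← ENNReal.ofReal_mul hGq.le]
  congr 1
  field_simp

/-! ### Polar coordinates about an axis -/

/-- Transfer of an integral along an isometry onto an orthogonal sum. -/
lemma lintegral_split {E U V : Type*}
    [NormedAddCommGroup E] [InnerProductSpace ℝ E] [FiniteDimensional ℝ E] [MeasurableSpace E]
    [BorelSpace E]
    [NormedAddCommGroup U] [InnerProductSpace ℝ U] [FiniteDimensional ℝ U] [MeasurableSpace U]
    [BorelSpace U]
    [NormedAddCommGroup V] [InnerProductSpace ℝ V] [FiniteDimensional ℝ V] [MeasurableSpace V]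
    [BorelSpace V]
    (e : E ≃ₗᵢ[ℝ] WithLp 2 (U × V)) {f : E → ENNReal} {g : U → V → ENNReal}
    (hg : Measurable (Function.uncurry g)) (hfg : ∀ y, f y = g (e y).fst (e y).snd) :
    ∫⁻ y, f y = ∫⁻ a, ∫⁻ z, g a z := by
  have h1 : MeasurePreserving (fun y => WithLp.ofLp (e y)) (volume : Measure E)
      (volume : Measure (U × V)) :=
    (WithLp.volume_preserving_ofLp U V).comp e.measurePreserving
  have h2 : ∀ y, f y = Function.uncurry g (WithLp.ofLp (e y)) := fun y => hfg y
  simp only [h2]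
  rw [h1.lintegral_comp hg, Measure.volume_eq_prod, lintegral_prod _ hg.aemeasurable]
  rfl

/-- Cartesian coordinates along the line through `x` and its orthogonal complement. -/
lemma lintegral_axis {E : Type*} [NormedAddCommGroup E] [InnerProductSpace ℝ E]
    [FiniteDimensional ℝ E] [MeasurableSpace E] [BorelSpace E] {x : E} (hx : x ≠ 0)
    {G : ℝ → ℝ → ENNReal} (hG : Measurable (Function.uncurry G)) :
    ∫⁻ y : E, G ‖y‖ (‖x - y‖ ^ 2) =
      ∫⁻ a : ℝ, ∫⁻ z : (ℝ ∙ x)ᗮ,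
        G (√(a ^ 2 + ‖z‖ ^ 2)) ((‖x‖ - a) ^ 2 + ‖z‖ ^ 2) := by
  have hn : 0 < ‖x‖ := norm_pos_iff.2 hx
  set K : Submodule ℝ E := ℝ ∙ x with hK
  have hxK : x ∈ K := Submodule.mem_span_singleton_self x
  set xK : K := ⟨x, hxK⟩ with hxKdef
  have hGm : Measurable (fun q : ℝ × ℝ => G q.1 q.2) := hG
  have h1 : ∫⁻ y : E, G ‖y‖ (‖x - y‖ ^ 2) = ∫⁻ κ : K, ∫⁻ z : Kᗮ,
      G (√(‖κ‖ ^ 2 + ‖z‖ ^ 2)) (‖xK - κ‖ ^ 2 + ‖z‖ ^ 2) := by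
    refine lintegral_split (K.orthogonalDecomposition) ?_ ?_
    · exact hGm.comp (Measurable.prodMk (by fun_prop) (by fun_prop))
    · intro y
      have hnorm : ∀ w : E, ‖w‖ ^ 2 = ‖(K.orthogonalDecomposition w).fst‖ ^ 2
          + ‖(K.orthogonalDecomposition w).snd‖ ^ 2 := fun w => by
        rw [← K.orthogonalDecomposition.norm_map w, WithLp.prod_norm_sq_eq_of_L2]
      have hfx : (K.orthogonalDecomposition x).fst = xK := by
        rw [Submodule.fst_orthogonalDecomposition_apply]
        exact Submodule.orthogonalProjectionOnto_mem_subspace_eq_self xK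
      have hsx : (K.orthogonalDecomposition x).snd = 0 := by
        rw [Submodule.snd_orthogonalDecomposition_apply]
        exact Submodule.orthogonalProjectionOnto_eq_zero_iff.2
          (Submodule.le_orthogonal_orthogonal K hxK)
      congr 1
      · rw [← hnorm, Real.sqrt_sq (norm_nonneg _)]
      · rw [hnorm (x - y), map_sub, WithLp.sub_fst, WithLp.sub_snd, hfx, hsx, zero_sub, norm_neg]
  rw [h1]
  let f : ℝ ≃ₗᵢ[ℝ] K := (LinearIsometryEquiv.toSpanUnitSingleton (‖x‖⁻¹ • x)
      (by simp [norm_smul, hn.ne'])).trans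
    (LinearIsometryEquiv.ofEq _ _ (Submodule.span_singleton_smul_eq (by simpa using hn.ne') x))
  have hf : ∀ a : ℝ, ((f a : K) : E) = a • ‖x‖⁻¹ • x := fun a => by simp [f]
  have hfn : ∀ a : ℝ, ‖xK - f a‖ ^ 2 = (‖x‖ - a) ^ 2 := by
    intro a
    have : xK = f ‖x‖ := by
      apply Subtype.ext; rw [hf, smul_smul, mul_inv_cancel₀ hn.ne', one_smul]
    rw [this, ← map_sub, f.norm_map, Real.norm_eq_abs, sq_abs]
  rw [← f.measurePreserving.lintegral_comp_emb f.toHomeomorph.measurableEmbedding]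
  refine lintegral_congr fun a => lintegral_congr fun z => ?_
  rw [hfn, f.norm_map, Real.norm_eq_abs, sq_abs]

/-- Polar coordinates in dimension at least two, for a function of `|y|` and `|x - y|`; `θ` is the
angle between `y` and `x`. -/
lemma lintegral_polar {E : Type*} [NormedAddCommGroup E] [InnerProductSpace ℝ E]
    [FiniteDimensional ℝ E] [MeasurableSpace E] [BorelSpace E] {m : ℕ}
    (hm : Module.finrank ℝ E = m + 2) {x : E} (hx : x ≠ 0)
    {G : ℝ → ℝ → ENNReal} (hG : Measurable (Function.uncurry G)) :
    ∫⁻ y : E, G ‖y‖ (‖x - y‖ ^ 2) =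
      ∫⁻ ρ in Ioi (0:ℝ), ENNReal.ofReal (ρ ^ (m+1)) * (ENNReal.ofReal (sphereVol m) *
        ∫⁻ θ in Ioo 0 π, ENNReal.ofReal (sin θ ^ m) *
          G ρ (‖x‖ ^ 2 - 2 * ‖x‖ * ρ * cos θ + ρ ^ 2)) := by
  have hGm : Measurable (fun q : ℝ × ℝ => G q.1 q.2) := hG
  have : Fact (Module.finrank ℝ E = (m+1) + 1) := ⟨hm⟩
  have hperp : Module.finrank ℝ (ℝ ∙ x)ᗮ = m + 1 := Submodule.finrank_orthogonal_span_singleton hx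
  set n := ‖x‖ with hn
  set F : ℝ × ℝ → ENNReal := fun q => (Ioi (0:ℝ)).indicator (fun b => ENNReal.ofReal (b ^ m) *
      G (√(q.1 ^ 2 + b ^ 2)) ((n - q.1) ^ 2 + b ^ 2)) q.2 with hF
  have hFm : Measurable F := by
    have : F = ((univ : Set ℝ) ×ˢ Ioi (0:ℝ)).indicator (fun q => ENNReal.ofReal (q.2 ^ m) *
      G (√(q.1 ^ 2 + q.2 ^ 2)) ((n - q.1) ^ 2 + q.2 ^ 2)) := by
      ext q
      simp only [hF, indicator, mem_prod, mem_univ, true_and]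
    rw [this]
    refine Measurable.indicator ?_ (MeasurableSet.univ.prod measurableSet_Ioi)
    refine Measurable.mul (by fun_prop) ?_
    exact hGm.comp (Measurable.prodMk (by fun_prop) (by fun_prop))
  calc _ = ∫⁻ a : ℝ, ∫⁻ z : (ℝ ∙ x)ᗮ, G (√(a ^ 2 + ‖z‖ ^ 2)) ((n - a) ^ 2 + ‖z‖ ^ 2) :=
        lintegral_axis hx hG
    _ = ∫⁻ a : ℝ, ENNReal.ofReal (sphereVol m) * ∫⁻ b, F (a, b) := by
        refine lintegral_congr fun a => ?_
        rw [lintegral_fun_norm (E := (ℝ ∙ x)ᗮ) hperp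
          (f := fun b => G (√(a ^ 2 + b ^ 2)) ((n - a) ^ 2 + b ^ 2))
          (hGm.comp (Measurable.prodMk (by fun_prop) (by fun_prop)))]
        rw [← lintegral_indicator measurableSet_Ioi]
    _ = ENNReal.ofReal (sphereVol m) * ∫⁻ q : ℝ × ℝ, F q := by
        rw [lintegral_const_mul' _ _ ENNReal.ofReal_ne_top, Measure.volume_eq_prod,
          lintegral_prod _ hFm.aemeasurable]
    _ = ENNReal.ofReal (sphereVol m) * ∫⁻ ρ in Ioi (0:ℝ), ∫⁻ θ in Ioo (-π) π,
          ENNReal.ofReal ρ * F (ρ * cos θ, ρ * sin θ) := by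
        rw [← lintegral_comp_polarCoord_symm]
        simp only [polarCoord_target, polarCoord_symm_apply, smul_eq_mul]
        rw [Measure.volume_eq_prod, ← Measure.prod_restrict, lintegral_prod]
        refine (Measurable.mul (by fun_prop) ?_).aemeasurable
        exact hFm.comp (Measurable.prodMk (by fun_prop) (by fun_prop))
    _ = _ := by
        rw [← lintegral_const_mul' _ _ ENNReal.ofReal_ne_top]
        refine setLIntegral_congr_fun measurableSet_Ioi fun ρ hρ => ?_
        have hρ : 0 < ρ := hρ
        rw [mul_left_comm]
        congr 1
        rw [← lintegral_const_mul' _ _ ENNReal.ofReal_ne_top,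
          ← lintegral_indicator measurableSet_Ioo, ← lintegral_indicator measurableSet_Ioo]
        refine lintegral_congr fun θ => ?_
        by_cases h1 : θ ∈ Ioo 0 π
        · have h2 : θ ∈ Ioo (-π) π := ⟨by linarith [h1.1, Real.pi_pos], h1.2⟩
          have hsin : 0 < sin θ := sin_pos_of_pos_of_lt_pi h1.1 h1.2
          rw [indicator_of_mem h1, indicator_of_mem h2]
          simp only [hF]
          rw [indicator_of_mem (by simp only [mem_Ioi]; positivity), ← mul_assoc, ← mul_assoc,
            ← ENNReal.ofReal_mul hρ.le, ← ENNReal.ofReal_mul (by positivity)]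
          have e1 : √((ρ * cos θ) ^ 2 + (ρ * sin θ) ^ 2) = ρ := by
            rw [show (ρ * cos θ) ^ 2 + (ρ * sin θ) ^ 2 = ρ ^ 2 * (sin θ ^ 2 + cos θ ^ 2) by ring,
              sin_sq_add_cos_sq, mul_one, Real.sqrt_sq hρ.le]
          have e2 : (n - ρ * cos θ) ^ 2 + (ρ * sin θ) ^ 2 =
              n ^ 2 - 2 * n * ρ * cos θ + ρ ^ 2 := by
            rw [show (n - ρ * cos θ) ^ 2 + (ρ * sin θ) ^ 2 =
              n ^ 2 - 2 * n * ρ * cos θ + ρ ^ 2 * (sin θ ^ 2 + cos θ ^ 2) by ring,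
              sin_sq_add_cos_sq, mul_one]
          rw [e1, e2]
          congr 2; ring
        · rw [indicator_of_notMem h1]
          by_cases h2 : θ ∈ Ioo (-π) π
          · rw [indicator_of_mem h2]
            have h3 : θ ≤ 0 := by
              by_contra hcon
              exact h1 ⟨not_le.1 hcon, h2.2⟩
            have hsin : sin θ ≤ 0 := sin_nonpos_of_nonpos_of_neg_pi_le h3 h2.1.le
            simp only [hF]
            rw [indicator_of_notMem, mul_zero]
            simp only [mem_Ioi, not_lt]
            exact mul_nonpos_of_nonneg_of_nonpos hρ.le hsin
          · rw [indicator_of_notMem h2]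

/-- The one-dimensional counterpart of `lintegral_polar`, the sphere consisting of two points. -/
lemma lintegral_polar_one {E : Type*} [NormedAddCommGroup E] [InnerProductSpace ℝ E]
    [FiniteDimensional ℝ E] [MeasurableSpace E] [BorelSpace E]
    (hm : Module.finrank ℝ E = 1) {x : E} (hx : x ≠ 0)
    {G : ℝ → ℝ → ENNReal} (hG : Measurable (Function.uncurry G)) :
    ∫⁻ y : E, G ‖y‖ (‖x - y‖ ^ 2) =
      ∫⁻ ρ in Ioi (0:ℝ), (G ρ ((‖x‖ - ρ) ^ 2) + G ρ ((‖x‖ + ρ) ^ 2)) := by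
  have hGm : Measurable (fun q : ℝ × ℝ => G q.1 q.2) := hG
  set n := ‖x‖ with hn
  have hn0 : 0 < n := norm_pos_iff.2 hx
  have hnorm1 : ‖n⁻¹ • x‖ = 1 := by
    rw [norm_smul, norm_inv, norm_norm, inv_mul_cancel₀ hn0.ne']
  have htop : (ℝ ∙ (n⁻¹ • x)) = (⊤ : Submodule ℝ E) :=
    (finrank_eq_one_iff_of_nonzero _ (by
      intro h0; rw [h0, norm_zero] at hnorm1; exact zero_ne_one hnorm1)).1 hm
  let f : ℝ ≃ₗᵢ[ℝ] E := (LinearIsometryEquiv.toSpanUnitSingleton (n⁻¹ • x) hnorm1).trans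
    (LinearIsometryEquiv.ofTop E _ htop)
  have hfx : f n = x := by
    simp [f, smul_smul, mul_inv_cancel₀ hn0.ne']
  rw [← f.measurePreserving.lintegral_comp_emb f.toHomeomorph.measurableEmbedding]
  have h1 : ∀ a : ℝ, G ‖f a‖ (‖x - f a‖ ^ 2) = G |a| ((n - a) ^ 2) := by
    intro a
    conv_lhs => rw [← hfx, ← map_sub, f.norm_map, f.norm_map]
    rw [Real.norm_eq_abs, Real.norm_eq_abs, sq_abs]
  simp only [h1]
  have hm1 : Measurable fun a : ℝ => G a ((n - a) ^ 2) :=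
    hGm.comp (Measurable.prodMk (by fun_prop) (by fun_prop))
  rw [lintegral_add_left hm1]
  have h2 : ∫⁻ a : ℝ, G |a| ((n - a) ^ 2) =
      (∫⁻ a in Iic (0:ℝ), G |a| ((n - a) ^ 2)) + ∫⁻ a in Ioi (0:ℝ), G |a| ((n - a) ^ 2) := by
    rw [← lintegral_add_compl _ (measurableSet_Iic (a := (0:ℝ))), compl_Iic]
  rw [h2, add_comm]
  congr 1
  · refine setLIntegral_congr_fun measurableSet_Ioi fun ρ hρ => ?_
    simp only [abs_of_pos (show 0 < ρ from hρ)]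
  · rw [setLIntegral_congr (Iio_ae_eq_Iic (a := (0:ℝ))).symm]
    rw [← lintegral_indicator measurableSet_Iio, ← lintegral_indicator measurableSet_Ioi,
      ← lintegral_neg_eq_self (μ := (volume : Measure ℝ))]
    refine lintegral_congr fun a => ?_
    by_cases ha : 0 < a
    · rw [indicator_of_mem (by simpa using ha), indicator_of_mem (by simpa using ha)]
      rw [abs_neg, abs_of_pos ha, sub_neg_eq_add]
    · rw [indicator_of_notMem (by simpa using ha), indicator_of_notMem (by simpa using ha)]

/-! ### The angular kernel on `ℝ^k` -/

/-- The orthogonal splitting `ℝ^(k+m) = ℝ^k × ℝ^m`, `x ↦ (x_k, x_{d-k})`. -/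
def splitE (k m : ℕ) : EuclideanSpace ℝ (Fin (k + m)) ≃ₗᵢ[ℝ]
    WithLp 2 (EuclideanSpace ℝ (Fin k) × EuclideanSpace ℝ (Fin m)) :=
  (LinearIsometryEquiv.piLpCongrLeft 2 ℝ ℝ finSumFinEquiv.symm).trans
    (PiLp.sumPiLpEquivProdLpPiLp (𝕜 := ℝ) 2 (α := fun _ : Fin k ⊕ Fin m => ℝ))

lemma norm_splitE_fst (k m : ℕ) (x : EuclideanSpace ℝ (Fin (k + m))) :
    ‖(splitE k m x).fst‖ = pnorm (k + m) k x := by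
  rw [EuclideanSpace.norm_eq, pnorm, Fin.sum_univ_add]
  congr 1
  simp [splitE]
  rfl

lemma pnorm_nonneg (d k : ℕ) (x : EuclideanSpace ℝ (Fin d)) : 0 ≤ pnorm d k x :=
  Real.sqrt_nonneg _

lemma continuous_pnorm (d k : ℕ) : Continuous (pnorm d k) := by
  unfold pnorm
  refine Real.continuous_sqrt.comp (continuous_finsetSum _ fun i _ => ?_)
  split_ifs
  · fun_prop
  · fun_prop

lemma measurable_pnorm (d k : ℕ) : Measurable (pnorm d k) := (continuous_pnorm d k).measurable

/-- The constant relating the kernel on `ℝ^(k+m)` to the kernel on `ℝ^k`. -/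
def cst (k m : ℕ) (σ : ℝ) : ℝ :=
  π ^ ((m : ℝ) / 2) * Real.Gamma (((k : ℝ) + σ) / 2) / Real.Gamma (((k : ℝ) + m + σ) / 2)

lemma cst_pos {k : ℕ} (hk : 1 ≤ k) (m : ℕ) {σ : ℝ} (hσ : 0 < σ) : 0 < cst k m σ := by
  have h1 : 0 < Real.Gamma (((k : ℝ) + σ) / 2) := Real.Gamma_pos_of_pos (by positivity)
  have h2 : 0 < Real.Gamma (((k : ℝ) + m + σ) / 2) := Real.Gamma_pos_of_pos (by positivity)
  unfold cst; positivity

/-- The kernel `|x - y|^{-k-σ}` on `ℝ^k` integrated over the unit sphere directions of `y`, as a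
function of `n = |x|` and `ρ = |y|`. -/
def angKer (k : ℕ) (σ n ρ : ℝ) : ENNReal :=
  if k = 1 then ENNReal.ofReal (((n - ρ) ^ 2) ^ (-(((k : ℝ) + σ) / 2))) +
    ENNReal.ofReal (((n + ρ) ^ 2) ^ (-(((k : ℝ) + σ) / 2)))
  else ENNReal.ofReal (sphereVol (k - 2)) * ∫⁻ θ in Ioo 0 π, ENNReal.ofReal (sin θ ^ (k - 2)) *
    ENNReal.ofReal ((n ^ 2 - 2 * n * ρ * cos θ + ρ ^ 2) ^ (-(((k : ℝ) + σ) / 2)))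

lemma measurable_angKer (k : ℕ) (σ : ℝ) : Measurable (fun q : ℝ × ℝ => angKer k σ q.1 q.2) := by
  unfold angKer
  split_ifs
  · fun_prop
  · refine Measurable.const_mul ?_ _
    refine Measurable.lintegral_prod_right' (f := fun z : (ℝ × ℝ) × ℝ =>
      ENNReal.ofReal (sin z.2 ^ (k - 2)) *
      ENNReal.ofReal ((z.1.1 ^ 2 - 2 * z.1.1 * z.1.2 * cos z.2 + z.1.2 ^ 2) ^
        (-(((k : ℝ) + σ) / 2)))) ?_
    fun_prop

/-- Polar coordinates on `ℝ^k` for the kernel `|x - y|^{-k-σ}`. -/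
lemma lintegral_angKer {U : Type*} [NormedAddCommGroup U] [InnerProductSpace ℝ U]
    [FiniteDimensional ℝ U] [MeasurableSpace U] [BorelSpace U] {k : ℕ} (hk : 1 ≤ k)
    (hU : Module.finrank ℝ U = k) (σ : ℝ) {x : U} (hx : x ≠ 0) {h : ℝ → ENNReal}
    (hh : Measurable h) :
    ∫⁻ y : U, h ‖y‖ * ENNReal.ofReal ((‖x - y‖ ^ 2) ^ (-(((k : ℝ) + σ) / 2))) =
      ∫⁻ ρ in Ioi (0:ℝ), h ρ * (ENNReal.ofReal (ρ ^ (k - 1)) * angKer k σ ‖x‖ ρ) := by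
  set G : ℝ → ℝ → ENNReal := fun r t => h r * ENNReal.ofReal (t ^ (-(((k : ℝ) + σ) / 2))) with hG
  have hGm : Measurable (Function.uncurry G) := by
    unfold Function.uncurry; simp only [hG]; fun_prop
  rcases Nat.lt_or_ge 1 k with h2 | h2
  · obtain ⟨j, rfl⟩ := Nat.exists_eq_add_of_le' (show 2 ≤ k from h2)
    have := lintegral_polar hU hx hGm
    simp only [hG] at this
    rw [this]
    refine setLIntegral_congr_fun measurableSet_Ioi fun ρ hρ => ?_
    have h3 : j + 2 ≠ 1 := by omega
    simp only [angKer, h3, if_false, Nat.add_sub_cancel, show j + 2 - 1 = j + 1 by omega]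
    rw [mul_left_comm (h ρ), mul_left_comm (h ρ)]
    congr 2
    rw [← lintegral_const_mul]
    · refine lintegral_congr fun θ => ?_
      ring
    · fun_prop
  · obtain rfl : k = 1 := le_antisymm h2 hk
    have := lintegral_polar_one hU hx hGm
    simp only [hG] at this
    rw [this]
    refine setLIntegral_congr_fun measurableSet_Ioi fun ρ hρ => ?_
    simp [angKer, mul_add]

/-- Integration of a function of `|y_k|` against the kernel `|x - y|^{-d-σ}` on `ℝ^d`. -/
lemma lintegral_kernel {k m : ℕ} (hk : 1 ≤ k) {σ : ℝ} (hσ : 0 < σ)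
    {x : EuclideanSpace ℝ (Fin (k + m))} (hx : 0 < pnorm (k + m) k x) {h : ℝ → ENNReal}
    (hh : Measurable h) :
    ∫⁻ y, h (pnorm (k + m) k y) * ENNReal.ofReal (‖x - y‖ ^ (-((k + m : ℕ) : ℝ) - σ)) =
      ENNReal.ofReal (cst k m σ) *
      ∫⁻ ρ in Ioi (0:ℝ), h ρ * (ENNReal.ofReal (ρ ^ (k - 1)) * angKer k σ (pnorm (k + m) k x) ρ) := by
  have hk0 : (0:ℝ) < k := by exact_mod_cast hk
  set a := (splitE k m x).fst with ha
  set z := (splitE k m x).snd with hz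
  have hna : ‖a‖ = pnorm (k + m) k x := norm_splitE_fst k m x
  have ha0 : a ≠ 0 := by rw [← norm_pos_iff, hna]; exact hx
  set q : ℝ := ((k:ℝ) + m + σ) / 2 with hq
  have h1 : ∫⁻ y, h (pnorm (k + m) k y) * ENNReal.ofReal (‖x - y‖ ^ (-((k + m : ℕ) : ℝ) - σ)) =
      ∫⁻ b : EuclideanSpace ℝ (Fin k), ∫⁻ w : EuclideanSpace ℝ (Fin m),
        h ‖b‖ * ENNReal.ofReal ((‖a - b‖ ^ 2 + ‖z - w‖ ^ 2) ^ (-q)) := by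
    refine lintegral_split (splitE k m) ?_ fun y => ?_
    · unfold Function.uncurry; fun_prop
    · rw [norm_splitE_fst]
      congr 2
      have hnorm : ‖x - y‖ ^ 2 = ‖a - (splitE k m y).fst‖ ^ 2 + ‖z - (splitE k m y).snd‖ ^ 2 := by
        rw [← (splitE k m).norm_map, WithLp.prod_norm_sq_eq_of_L2, map_sub, WithLp.sub_fst,
          WithLp.sub_snd]
      rw [← hnorm, ← Real.rpow_natCast ‖x - y‖ 2, ← Real.rpow_mul (norm_nonneg _)]
      congr 1
      rw [hq]; push_cast; ring
  rw [h1]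
  have h2 : ∀ᵐ b : EuclideanSpace ℝ (Fin k), ∫⁻ w : EuclideanSpace ℝ (Fin m),
        h ‖b‖ * ENNReal.ofReal ((‖a - b‖ ^ 2 + ‖z - w‖ ^ 2) ^ (-q)) =
      ENNReal.ofReal (cst k m σ) *
        (h ‖b‖ * ENNReal.ofReal ((‖a - b‖ ^ 2) ^ (-(((k : ℝ) + σ) / 2)))) := by
    have hnt : Nontrivial (EuclideanSpace ℝ (Fin k)) :=
      Module.nontrivial_of_finrank_pos (R := ℝ) (by simp; omega)
    filter_upwards [compl_mem_ae_iff.2 (measure_singleton (μ := volume) a)] with b hb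
    have hab : 0 < ‖a - b‖ ^ 2 := by
      have : a - b ≠ 0 := sub_ne_zero.2 fun h => hb (by simp [h])
      positivity
    rw [lintegral_const_mul _ (by fun_prop),
      lintegral_sub_left_eq_self (fun w => ENNReal.ofReal ((‖a - b‖ ^ 2 + ‖w‖ ^ 2) ^ (-q))) z,
      lintegral_rpow_add_sq hab (by simp [hq]; linarith), mul_left_comm]
    simp only [finrank_euclideanSpace, Fintype.card_fin]
    rw [show q - (m:ℝ)/2 = ((k:ℝ) + σ)/2 by rw [hq]; ring,
      show (m:ℝ)/2 - q = -(((k:ℝ) + σ)/2) by rw [hq]; ring, cst]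
  rw [lintegral_congr_ae h2, lintegral_const_mul' _ _ ENNReal.ofReal_ne_top,
    lintegral_angKer hk (by simp) σ ha0 hh, hna]

lemma angKer_symm (k : ℕ) (σ n ρ : ℝ) : angKer k σ n ρ = angKer k σ ρ n := by
  unfold angKer
  split_ifs
  · rw [show (n - ρ) ^ 2 = (ρ - n) ^ 2 by ring, add_comm n]
  · congr 1
    refine lintegral_congr fun θ => ?_
    rw [show n ^ 2 - 2 * n * ρ * cos θ + ρ ^ 2 = ρ ^ 2 - 2 * ρ * n * cos θ + n ^ 2 by ring]

/-- The angular kernel is homogeneous of degree `-k-σ`. -/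
lemma angKer_scale (k : ℕ) (σ : ℝ) {n : ℝ} (hn : 0 < n) (r : ℝ) :
    angKer k σ n (n * r) = ENNReal.ofReal (n ^ (-(k:ℝ) - σ)) * angKer k σ 1 r := by
  have h0 : ∀ t : ℝ, 0 ≤ t → (n ^ 2 * t) ^ (-(((k : ℝ) + σ) / 2)) =
      n ^ (-(k:ℝ) - σ) * t ^ (-(((k : ℝ) + σ) / 2)) := by
    intro t ht
    rw [Real.mul_rpow (by positivity) ht, ← Real.rpow_natCast n 2, ← Real.rpow_mul hn.le]
    congr 2; push_cast; ring
  unfold angKer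
  split_ifs
  · rw [show (n - n * r) ^ 2 = n ^ 2 * (1 - r) ^ 2 by ring,
      show (n + n * r) ^ 2 = n ^ 2 * (1 + r) ^ 2 by ring, h0 _ (by positivity),
      h0 _ (by positivity), mul_add, ENNReal.ofReal_mul (by positivity),
      ENNReal.ofReal_mul (by positivity)]
  · rw [mul_left_comm (ENNReal.ofReal (n ^ (-(k:ℝ) - σ))), ← lintegral_const_mul' (ENNReal.ofReal (n ^ (-(k:ℝ) - σ))) _
      ENNReal.ofReal_ne_top]
    congr 1
    refine lintegral_congr fun θ => ?_
    rw [show n ^ 2 - 2 * n * (n * r) * cos θ + (n * r) ^ 2 =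
      n ^ 2 * (1 ^ 2 - 2 * 1 * r * cos θ + r ^ 2) by ring, h0, ENNReal.ofReal_mul (by positivity),
      mul_left_comm]
    nlinarith [sin_sq_add_cos_sq θ, sq_nonneg (r - cos θ), sq_nonneg (sin θ)]

/-- The angular kernel is bounded away from its singularity at `r = 1`. -/
lemma angKer_bound (k : ℕ) {σ : ℝ} (hσ : 0 < σ) {ε : ℝ} (hε : 0 < ε) :
    ∃ M : ENNReal, M ≠ ⊤ ∧ ∀ r, 0 < r → r ≤ 1 - ε → angKer k σ 1 r ≤ M := by
  have hb : ∀ t : ℝ, ε ^ 2 ≤ t → t ^ (-(((k : ℝ) + σ) / 2)) ≤ (ε ^ 2) ^ (-(((k : ℝ) + σ) / 2)) := by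
    intro t ht
    exact Real.rpow_le_rpow_of_nonpos (by positivity) ht
      (by have : (0:ℝ) ≤ k := by positivity
          linarith)
  set B := (ε ^ 2) ^ (-(((k : ℝ) + σ) / 2)) with hB
  refine ⟨if k = 1 then ENNReal.ofReal B + ENNReal.ofReal B else
    ENNReal.ofReal (sphereVol (k - 2)) * (ENNReal.ofReal B * ENNReal.ofReal π), ?_, ?_⟩
  · split_ifs
    · simp
    · exact ENNReal.mul_ne_top ENNReal.ofReal_ne_top
        (ENNReal.mul_ne_top ENNReal.ofReal_ne_top ENNReal.ofReal_ne_top)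
  · intro r hr0 hr
    unfold angKer
    split_ifs
    · gcongr
      · apply hb; nlinarith
      · apply hb; nlinarith
    · gcongr
      calc _ ≤ ∫⁻ θ in Ioo 0 π, ENNReal.ofReal B := by
            refine setLIntegral_mono measurable_const fun θ hθ => ?_
            have hs := sin_pos_of_pos_of_lt_pi hθ.1 hθ.2
            rw [← ENNReal.ofReal_mul (by positivity)]
            apply ENNReal.ofReal_le_ofReal
            have h1 : sin θ ^ (k-2) ≤ 1 := pow_le_one₀ hs.le (sin_le_one θ)
            have h2 : (1 ^ 2 - 2 * 1 * r * cos θ + r ^ 2) ^ (-(((k : ℝ) + σ) / 2)) ≤ B := by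
              apply hb
              nlinarith [cos_le_one θ]
            have h3 : 0 ≤ (1 ^ 2 - 2 * 1 * r * cos θ + r ^ 2) ^ (-(((k : ℝ) + σ) / 2)) := by
              apply Real.rpow_nonneg
              nlinarith [cos_le_one θ]
            calc _ ≤ 1 * B := by gcongr
              _ = B := one_mul _
        _ = _ := by simp

/-- No integrability is required: otherwise the Bochner integral on the left is `0`. -/
lemma ofReal_integral_le {X : Type*} [MeasurableSpace X] {μ : Measure X} {f : X → ℝ}
    (hf : 0 ≤ᵐ[μ] f) : ENNReal.ofReal (∫ x, f x ∂μ) ≤ ∫⁻ x, ENNReal.ofReal (f x) ∂μ := by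
  by_cases h : Integrable f μ
  · exact (ofReal_integral_eq_lintegral_ofReal h hf).le
  · rw [integral_undef h]; simp

/-- Substituting `t = cos θ` turns `Φ` into the angular kernel. Recording only `≤` avoids having to
prove that the integral defining `Φ` converges. -/
lemma Phi_nonneg_and_le (k : ℕ) (hk : 1 ≤ k) {s p r : ℝ} (hr0 : 0 < r) (hr1 : r < 1) :
    0 ≤ Phi k s p r ∧ ENNReal.ofReal (Phi k s p r) ≤ angKer k (s * p) 1 r := by
  unfold Phi angKer
  split_ifs with h1
  · subst h1
    have e : ∀ t : ℝ, 0 < t → (t ^ 2) ^ (-((((1:ℕ) : ℝ) + s * p) / 2)) = t ^ (-1 - s * p) := by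
      intro t ht
      rw [← Real.rpow_natCast t 2, ← Real.rpow_mul ht.le]
      congr 1; push_cast; ring
    have p1 : 0 < 1 - r := by linarith
    have p2 : 0 < 1 + r := by linarith
    constructor
    · positivity
    · rw [e _ p1, e _ p2, ← ENNReal.ofReal_add (by positivity) (by positivity)]
  · obtain ⟨j, rfl⟩ := Nat.exists_eq_add_of_le' (show 2 ≤ k by omega)
    simp only [Nat.add_sub_cancel]
    set g : ℝ → ℝ := fun t => (1 - t ^ 2) ^ ((((j+2:ℕ) : ℝ) - 3) / 2) *
      (1 - 2 * t * r + r ^ 2) ^ (-((((j+2:ℕ) : ℝ) + s * p) / 2)) with hg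
    have hpos : ∀ t ∈ Icc (-1:ℝ) 1, 0 ≤ g t := by
      intro t ht
      have h2 : 0 ≤ 1 - t ^ 2 := by nlinarith [ht.1, ht.2]
      have h3 : 0 ≤ 1 - 2 * t * r + r ^ 2 := by nlinarith [ht.1, ht.2]
      exact mul_nonneg (Real.rpow_nonneg h2 _) (Real.rpow_nonneg h3 _)
    constructor
    · exact mul_nonneg (sphereVol_nonneg _) (setIntegral_nonneg measurableSet_Icc hpos)
    · rw [ENNReal.ofReal_mul (sphereVol_nonneg _)]
      gcongr
      rw [integral_Icc_eq_integral_Ioo]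
      refine (ofReal_integral_le ?_).trans ?_
      · exact (ae_restrict_mem measurableSet_Ioo).mono fun t ht => hpos t (Ioo_subset_Icc_self ht)
      have himg : Ioo (-1:ℝ) 1 = cos '' Ioo 0 π := by
        have := Real.bijOn_cos
        ext t
        constructor
        · intro ht
          refine ⟨arccos t, ⟨arccos_pos.2 ht.2, ?_⟩, cos_arccos ht.1.le ht.2.le⟩
          exact lt_of_le_of_ne (arccos_le_pi t) fun h => by
            have := arccos_eq_pi.1 h; linarith [ht.1]
        · rintro ⟨θ, hθ, rfl⟩
          have hs := sin_pos_of_pos_of_lt_pi hθ.1 hθ.2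
          have := sin_sq_add_cos_sq θ
          constructor <;> nlinarith
      rw [himg, lintegral_image_eq_lintegral_abs_deriv_mul measurableSet_Ioo
        (fun θ _ => (hasDerivAt_cos θ).hasDerivWithinAt)
        (injOn_cos.mono Ioo_subset_Icc_self)]
      refine setLIntegral_mono (by fun_prop) fun θ hθ => ?_
      have hs := sin_pos_of_pos_of_lt_pi hθ.1 hθ.2
      rw [← ENNReal.ofReal_mul (by positivity), ← ENNReal.ofReal_mul (by positivity)]
      apply le_of_eq
      congr 1
      rw [abs_neg, abs_of_pos hs, ← mul_assoc]
      congr 1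
      · rw [show 1 - cos θ ^ 2 = sin θ ^ 2 by linarith [sin_sq_add_cos_sq θ],
          ← Real.rpow_natCast (sin θ) 2, ← Real.rpow_mul hs.le]
        nth_rewrite 1 [← Real.rpow_one (sin θ)]
        rw [← Real.rpow_add hs, ← Real.rpow_natCast (sin θ) j]
        congr 1
        push_cast; ring
      · congr 1; ring

/-! ### Integration of functions of the two radii -/

lemma lintegral_Ioi_scale {n : ℝ} (hn : 0 < n) (F : ℝ → ENNReal) :
    ∫⁻ ρ in Ioi (0:ℝ), F ρ = ENNReal.ofReal n * ∫⁻ r in Ioi (0:ℝ), F (n * r) := by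
  have himg : (fun r => n * r) '' Ioi (0:ℝ) = Ioi 0 := by
    rw [image_mul_left_Ioi hn, mul_zero]
  conv_lhs => rw [← himg]
  rw [lintegral_image_eq_lintegral_abs_deriv_mul measurableSet_Ioi
    (f := fun r => n * r) (f' := fun _ => n * 1)
    (fun r _ => ((hasDerivAt_id r).const_mul n).hasDerivWithinAt)
    ((mul_right_injective₀ hn.ne').injOn)]
  rw [← lintegral_const_mul' _ _ ENNReal.ofReal_ne_top]
  simp [abs_of_pos hn]

/-- The substitution `t = 1/r`. -/
lemma lintegral_Ioi_inv (F : ℝ → ENNReal) :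
    ∫⁻ t in Ioi (0:ℝ), F t = ∫⁻ r in Ioi (0:ℝ), ENNReal.ofReal ((r ^ 2)⁻¹) * F r⁻¹ := by
  have himg : (fun r : ℝ => r⁻¹) '' Ioi (0:ℝ) = Ioi 0 := by
    ext t
    constructor
    · rintro ⟨r, hr, rfl⟩; exact inv_pos.2 (mem_Ioi.1 hr)
    · intro ht; exact ⟨t⁻¹, mem_Ioi.2 (inv_pos.2 (mem_Ioi.1 ht)), inv_inv t⟩
  conv_lhs => rw [← himg]
  rw [lintegral_image_eq_lintegral_abs_deriv_mul measurableSet_Ioi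
    (fun r (hr : r ∈ Ioi (0:ℝ)) => (hasDerivAt_inv (ne_of_gt hr)).hasDerivWithinAt)
    inv_injective.injOn]
  refine setLIntegral_congr_fun measurableSet_Ioi fun r hr => ?_
  rw [abs_neg, abs_of_nonneg (by positivity)]

section
variable {k m : ℕ}

lemma ae_pnorm_pos (hk : 1 ≤ k) : ∀ᵐ x : EuclideanSpace ℝ (Fin (k + m)), 0 < pnorm (k + m) k x := by
  have hnt : Nontrivial (EuclideanSpace ℝ (Fin k)) :=
    Module.nontrivial_of_finrank_pos (R := ℝ) (by simp; omega)
  have hms : MeasurableSet {x : EuclideanSpace ℝ (Fin (k + m)) | pnorm (k + m) k x = 0} :=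
    measurable_pnorm _ _ (measurableSet_singleton 0)
  have h0 : volume {x : EuclideanSpace ℝ (Fin (k + m)) | pnorm (k + m) k x = 0} = 0 := by
    rw [← lintegral_indicator_one hms,
      lintegral_split (splitE k m) (g := fun a _ => ({0} : Set (EuclideanSpace ℝ (Fin k))).indicator (fun _ => (1:ENNReal)) a)]
    · have : ∀ᵐ a : EuclideanSpace ℝ (Fin k), ∫⁻ _ : EuclideanSpace ℝ (Fin m),
          ({0} : Set (EuclideanSpace ℝ (Fin k))).indicator (fun _ => (1:ENNReal)) a = 0 := by
        filter_upwards [compl_mem_ae_iff.2 (measure_singleton (μ := volume) (0 : EuclideanSpace ℝ (Fin k)))] with a ha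
        rw [indicator_of_notMem ha]; simp
      rw [lintegral_congr_ae this]; simp
    · exact (measurable_const.indicator (measurableSet_singleton _)).comp measurable_fst
    · intro y
      simp only [indicator, mem_ofPred_eq, mem_singleton_iff, ← norm_splitE_fst, norm_eq_zero]
      rfl
  filter_upwards [compl_mem_ae_iff.2 h0] with x hx
  exact lt_of_le_of_ne (pnorm_nonneg _ _ _) (fun h => hx h.symm)

lemma kernel_pos {x y : EuclideanSpace ℝ (Fin (k + m))} (h : x ≠ y) (e : ℝ) : 0 < ‖x - y‖ ^ e :=
  Real.rpow_pos_of_pos (norm_pos_iff.2 (sub_ne_zero.2 h)) _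

/-- The set where `|x_k| = |y_k|` is null, since spheres in `ℝ^k` are. -/
lemma ae_pnorm_ne (hk : 1 ≤ k) :
    ∀ᵐ z : EuclideanSpace ℝ (Fin (k + m)) × EuclideanSpace ℝ (Fin (k + m)) ∂(volume.prod volume),
      pnorm (k + m) k z.1 ≠ pnorm (k + m) k z.2 := by
  have hnt : Nontrivial (EuclideanSpace ℝ (Fin (k + m))) :=
    Module.nontrivial_of_finrank_pos (R := ℝ) (by simp; omega)
  have hms : MeasurableSet {z : EuclideanSpace ℝ (Fin (k + m)) × EuclideanSpace ℝ (Fin (k + m)) |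
      pnorm (k + m) k z.1 ≠ pnorm (k + m) k z.2} := by
    have h1 : Measurable fun z : EuclideanSpace ℝ (Fin (k + m)) × EuclideanSpace ℝ (Fin (k + m)) =>
      pnorm (k + m) k z.1 := (measurable_pnorm (k+m) k).comp measurable_fst
    have h2 : Measurable fun z : EuclideanSpace ℝ (Fin (k + m)) × EuclideanSpace ℝ (Fin (k + m)) =>
      pnorm (k + m) k z.2 := (measurable_pnorm (k+m) k).comp measurable_snd
    exact (measurableSet_eq_fun h1 h2).compl
  rw [Measure.ae_prod_iff_ae_ae hms]
  filter_upwards [ae_pnorm_pos hk] with x hx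
  set n := pnorm (k + m) k x with hn
  set i1 : ℝ → ENNReal := ({n} : Set ℝ).indicator (fun _ => (1:ENNReal)) with hi1
  have hi1m : Measurable i1 := measurable_const.indicator (measurableSet_singleton _)
  have h1 := lintegral_kernel (m := m) hk one_pos hx hi1m
  have h2 : ∫⁻ ρ in Ioi (0:ℝ), i1 ρ * (ENNReal.ofReal (ρ ^ (k - 1)) * angKer k 1 n ρ) = 0 := by
    have h3 : ∀ᵐ ρ ∂(volume.restrict (Ioi (0:ℝ))),
        i1 ρ * (ENNReal.ofReal (ρ ^ (k - 1)) * angKer k 1 n ρ) = 0 := by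
      refine ae_restrict_of_ae ?_
      filter_upwards [compl_mem_ae_iff.2 (measure_singleton (μ := volume) n)] with ρ hρ
      rw [hi1, indicator_of_notMem hρ, zero_mul]
    rw [lintegral_congr_ae h3, lintegral_zero]
  have hmy : Measurable fun y : EuclideanSpace ℝ (Fin (k + m)) => i1 (pnorm (k + m) k y) *
      ENNReal.ofReal (‖x - y‖ ^ (-((k + m : ℕ) : ℝ) - 1)) :=
    (hi1m.comp (measurable_pnorm _ _)).mul (by fun_prop)
  rw [← hn, h2, mul_zero, lintegral_eq_zero_iff hmy] at h1
  filter_upwards [h1, compl_mem_ae_iff.2 (measure_singleton (μ := volume) x)] with y hy hyx heq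
  have hyx' : x ≠ y := fun h => hyx (by simp [h])
  simp only [Pi.zero_apply, mul_eq_zero, ENNReal.ofReal_eq_zero, not_le.2 (kernel_pos hyx' _),
    or_false] at hy
  have h4 : i1 (pnorm (k + m) k y) = 1 := by
    rw [hi1, indicator_of_mem (by rw [mem_singleton_iff]; exact heq.symm)]
  rw [h4] at hy
  exact one_ne_zero hy

/-- Tonelli for integrands of the form `f x * H |x_k| |y_k|` against the kernel. -/
lemma lintegral_dbl_fst (hk : 1 ≤ k) {σ : ℝ} (hσ : 0 < σ)
    {f : EuclideanSpace ℝ (Fin (k + m)) → ENNReal} (hf : Measurable f)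
    {H : ℝ → ℝ → ENNReal} (hH : Measurable (Function.uncurry H)) :
    ∫⁻ z, f z.1 * (H (pnorm (k+m) k z.1) (pnorm (k+m) k z.2) *
        ENNReal.ofReal (‖z.1 - z.2‖ ^ (-((k + m : ℕ) : ℝ) - σ))) ∂(volume.prod volume) =
      ∫⁻ x, f x * (ENNReal.ofReal (cst k m σ) * ∫⁻ ρ in Ioi (0:ℝ), H (pnorm (k+m) k x) ρ *
        (ENNReal.ofReal (ρ ^ (k - 1)) * angKer k σ (pnorm (k + m) k x) ρ)) := by
  have hHm : Measurable (fun q : ℝ × ℝ => H q.1 q.2) := hH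
  have hN := measurable_pnorm (k+m) k
  have hmeas : Measurable (fun z : EuclideanSpace ℝ (Fin (k + m)) × EuclideanSpace ℝ (Fin (k + m)) =>
      H (pnorm (k+m) k z.1) (pnorm (k+m) k z.2) *
        ENNReal.ofReal (‖z.1 - z.2‖ ^ (-((k + m : ℕ) : ℝ) - σ))) :=
    (hHm.comp ((hN.comp measurable_fst).prodMk (hN.comp measurable_snd))).mul (by fun_prop)
  have hmeas2 : Measurable (fun z : EuclideanSpace ℝ (Fin (k + m)) × EuclideanSpace ℝ (Fin (k + m)) =>
      f z.1 * (H (pnorm (k+m) k z.1) (pnorm (k+m) k z.2) *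
        ENNReal.ofReal (‖z.1 - z.2‖ ^ (-((k + m : ℕ) : ℝ) - σ)))) :=
    (hf.comp measurable_fst).mul hmeas
  rw [lintegral_prod _ hmeas2.aemeasurable]
  refine lintegral_congr_ae ?_
  filter_upwards [ae_pnorm_pos hk] with x hx
  refine (lintegral_const_mul (f x) (hmeas.comp
    ((measurable_const (a := x)).prodMk measurable_id))).trans ?_
  congr 1
  exact lintegral_kernel hk hσ hx (h := fun ρ => H (pnorm (k+m) k x) ρ)
    (hHm.comp (measurable_const.prodMk measurable_id))

/-- The version of `lintegral_dbl_fst` with the roles of `x` and `y` exchanged. -/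
lemma lintegral_dbl_snd (hk : 1 ≤ k) {σ : ℝ} (hσ : 0 < σ)
    {f : EuclideanSpace ℝ (Fin (k + m)) → ENNReal} (hf : Measurable f)
    {H : ℝ → ℝ → ENNReal} (hH : Measurable (Function.uncurry H)) :
    ∫⁻ z, f z.2 * (H (pnorm (k+m) k z.1) (pnorm (k+m) k z.2) *
        ENNReal.ofReal (‖z.1 - z.2‖ ^ (-((k + m : ℕ) : ℝ) - σ))) ∂(volume.prod volume) =
      ∫⁻ x, f x * (ENNReal.ofReal (cst k m σ) * ∫⁻ ρ in Ioi (0:ℝ), H ρ (pnorm (k+m) k x) *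
        (ENNReal.ofReal (ρ ^ (k - 1)) * angKer k σ (pnorm (k + m) k x) ρ)) := by
  rw [← lintegral_dbl_fst hk hσ hf (H := fun a b => H b a) (hH.comp measurable_swap),
    ← lintegral_prod_swap]
  refine lintegral_congr fun z => ?_
  simp only [Prod.fst_swap, Prod.snd_swap]
  rw [norm_sub_rev]

end

/-! ### Radial densities -/

/-- The symmetrised weight `n^α ρ^β + n^β ρ^α`. -/
def symW (α β n ρ : ℝ) : ℝ := n ^ α * ρ ^ β + n ^ β * ρ ^ α

/-- The ground-state weight difference `|n^{-γ} - ρ^{-γ}|^{p-1}`. -/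
def difW (γ p n ρ : ℝ) : ℝ := |n ^ (-γ) - ρ ^ (-γ)| ^ (p - 1)

/-- Pairs of radii `(n, ρ)` with `0 < ρ < τ n`. -/
def coneR (τ : ℝ) : Set (ℝ × ℝ) := {q | 0 < q.1 ∧ 0 < q.2 ∧ q.2 < τ * q.1}

/-- The one-dimensional density against which the ground state identity is integrated. -/
def rad0 (γ p σ α β r : ℝ) : ℝ := |1 - r ^ γ| ^ (p - 1) * r ^ (σ - 1) * (r ^ (-α) + r ^ (-β))

lemma measurableSet_coneR (τ : ℝ) : MeasurableSet (coneR τ) := by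
  have h1 : MeasurableSet {q : ℝ × ℝ | 0 < q.1} := measurableSet_lt measurable_const measurable_fst
  have h2 : MeasurableSet {q : ℝ × ℝ | 0 < q.2} := measurableSet_lt measurable_const measurable_snd
  have h3 : MeasurableSet {q : ℝ × ℝ | q.2 < τ * q.1} :=
    measurableSet_lt measurable_snd (measurable_fst.const_mul τ)
  exact h1.inter (h2.inter h3)

lemma symW_nonneg {α β n ρ : ℝ} (hn : 0 ≤ n) (hρ : 0 ≤ ρ) : 0 ≤ symW α β n ρ := by
  unfold symW; positivity

lemma difW_nonneg (γ p n ρ : ℝ) : 0 ≤ difW γ p n ρ := by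
  unfold difW; positivity

lemma rad0_nonneg {γ p σ α β r : ℝ} (hr : 0 ≤ r) : 0 ≤ rad0 γ p σ α β r := by
  unfold rad0; positivity

lemma measurable_rad0 (γ p σ α β : ℝ) : Measurable (rad0 γ p σ α β) := by
  unfold rad0; fun_prop

/-- The kernel in the two radii, cut off to `coneR τ`. -/
def radH (τ α β γ p n ρ : ℝ) : ENNReal :=
  (coneR τ).indicator (fun q => ENNReal.ofReal (symW α β q.1 q.2 * difW γ p q.1 q.2)) (n, ρ)

lemma measurable_radH (τ α β γ p : ℝ) : Measurable (Function.uncurry (radH τ α β γ p)) := by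
  have : Function.uncurry (radH τ α β γ p) = (coneR τ).indicator
      (fun q => ENNReal.ofReal (symW α β q.1 q.2 * difW γ p q.1 q.2)) := by
    ext q; rfl
  rw [this]
  refine Measurable.indicator ?_ (measurableSet_coneR τ)
  unfold symW difW
  fun_prop

/-- The substitution `ρ = n r`, with the larger radius `n` held fixed. -/
lemma radH_integral_fst {k : ℕ} (hk : 1 ≤ k) {σ p α β γ τ : ℝ}
    (hγ : γ * p = k + α + β - σ) {n : ℝ} (hn : 0 < n) :
    ∫⁻ ρ in Ioi (0:ℝ), radH τ α β γ p n ρ * (ENNReal.ofReal (ρ ^ (k - 1)) * angKer k σ n ρ) =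
      ENNReal.ofReal (n ^ (α + β - σ - γ * (p - 1))) *
        ∫⁻ r in Ioo 0 τ, ENNReal.ofReal (r ^ γ * rad0 γ p σ α β r) * angKer k σ 1 r := by
  rw [lintegral_Ioi_scale hn, ← lintegral_const_mul' _ _ ENNReal.ofReal_ne_top,
    ← lintegral_const_mul' _ _ ENNReal.ofReal_ne_top, ← lintegral_indicator measurableSet_Ioi,
    ← lintegral_indicator measurableSet_Ioo]
  refine lintegral_congr fun r => ?_
  by_cases hr : r ∈ Ioo 0 τ
  · have hr0 : 0 < r := hr.1
    have hmem : (n, n * r) ∈ coneR τ := by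
      refine ⟨hn, by positivity, ?_⟩
      show n * r < τ * n
      nlinarith [hr.2]
    rw [indicator_of_mem (mem_Ioi.2 hr0), indicator_of_mem hr, radH, indicator_of_mem hmem,
      angKer_scale k σ hn]
    have hS : symW α β n (n * r) = n ^ (α + β) * (r ^ α + r ^ β) := by
      rw [symW, Real.mul_rpow hn.le hr0.le, Real.mul_rpow hn.le hr0.le, Real.rpow_add hn]; ring
    have hD : difW γ p n (n * r) = n ^ (-(γ * (p - 1))) * (r ^ (-(γ * (p-1))) *
        |1 - r ^ γ| ^ (p - 1)) := by
      rw [difW, Real.mul_rpow hn.le hr0.le]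
      have : n ^ (-γ) - n ^ (-γ) * r ^ (-γ) = - (n ^ (-γ) * (r ^ (-γ) * (1 - r ^ γ))) := by
        rw [mul_sub, ← Real.rpow_add hr0]; simp; ring
      rw [this, abs_neg, abs_mul, abs_mul, abs_of_pos (Real.rpow_pos_of_pos hn _),
        abs_of_pos (Real.rpow_pos_of_pos hr0 _), Real.mul_rpow (by positivity) (by positivity),
        Real.mul_rpow (by positivity) (by positivity), ← Real.rpow_mul hn.le,
        ← Real.rpow_mul hr0.le]
      ring_nf
    rw [hS, hD]
    simp only [← mul_assoc]
    congr 1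
    rw [← ENNReal.ofReal_mul (by positivity), ← ENNReal.ofReal_mul (by positivity),
      ← ENNReal.ofReal_mul (by positivity), ← ENNReal.ofReal_mul (by positivity)]
    congr 1
    rw [← Real.rpow_natCast (n * r), Nat.cast_sub hk, Real.mul_rpow hn.le hr0.le, rad0]
    push_cast
    have e1 : n ^ (α + β - σ - γ * (p - 1)) = n * n ^ (α+β) * n ^ (-(γ * (p-1))) *
        n ^ ((k:ℝ) - 1) * n ^ (-(k:ℝ) - σ) := by
      nth_rewrite 2 [← Real.rpow_one n]
      rw [← Real.rpow_add hn, ← Real.rpow_add hn, ← Real.rpow_add hn, ← Real.rpow_add hn]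
      congr 1; ring
    have e2 : r ^ α * r ^ (-(γ * (p-1))) * r ^ ((k:ℝ) - 1) = r ^ γ * r ^ (σ - 1) * r ^ (-β) := by
      rw [← Real.rpow_add hr0, ← Real.rpow_add hr0, ← Real.rpow_add hr0, ← Real.rpow_add hr0]
      congr 1; linarith
    have e3 : r ^ β * r ^ (-(γ * (p-1))) * r ^ ((k:ℝ) - 1) = r ^ γ * r ^ (σ - 1) * r ^ (-α) := by
      rw [← Real.rpow_add hr0, ← Real.rpow_add hr0, ← Real.rpow_add hr0, ← Real.rpow_add hr0]
      congr 1; linarith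
    rw [e1]
    linear_combination (n * n ^ (α+β) * n ^ (-(γ * (p-1))) *
        n ^ ((k:ℝ) - 1) * n ^ (-(k:ℝ) - σ)) * |1 - r ^ γ| ^ (p - 1) * (e2 + e3)
  · rw [indicator_of_notMem hr]
    by_cases hr0 : 0 < r
    · have hmem : (n, n * r) ∉ coneR τ := by
        rintro ⟨-, -, h3⟩
        have h3 : n * r < τ * n := h3
        exact hr ⟨hr0, by nlinarith⟩
      rw [indicator_of_mem (mem_Ioi.2 hr0), radH, indicator_of_notMem hmem]
      simp
    · rw [indicator_of_notMem (by simpa using hr0)]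

/-- The substitution `ρ = n / r`, with the smaller radius `n` held fixed. -/
lemma radH_integral_snd {k : ℕ} (hk : 1 ≤ k) {σ p α β γ τ : ℝ} {n : ℝ} (hn : 0 < n) :
    ∫⁻ ρ in Ioi (0:ℝ), radH τ α β γ p ρ n * (ENNReal.ofReal (ρ ^ (k - 1)) * angKer k σ n ρ) =
      ENNReal.ofReal (n ^ (α + β - σ - γ * (p - 1))) *
        ∫⁻ r in Ioo 0 τ, ENNReal.ofReal (rad0 γ p σ α β r) * angKer k σ 1 r := by
  rw [lintegral_Ioi_scale hn, lintegral_Ioi_inv, ← lintegral_const_mul' _ _ ENNReal.ofReal_ne_top,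
    ← lintegral_const_mul' _ _ ENNReal.ofReal_ne_top, ← lintegral_indicator measurableSet_Ioi,
    ← lintegral_indicator measurableSet_Ioo]
  refine lintegral_congr fun r => ?_
  by_cases hr : r ∈ Ioo 0 τ
  · have hr0 : 0 < r := hr.1
    have hi0 : 0 < r⁻¹ := inv_pos.2 hr0
    have hmem : (n * r⁻¹, n) ∈ coneR τ := by
      refine ⟨by positivity, hn, ?_⟩
      show n < τ * (n * r⁻¹)
      rw [← mul_assoc, ← div_eq_mul_inv, lt_div_iff₀ hr0]
      nlinarith [hr.2]
    have hang : angKer k σ n (n * r⁻¹) =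
        ENNReal.ofReal (n ^ (-(k:ℝ) - σ)) * (ENNReal.ofReal (r⁻¹ ^ (-(k:ℝ) - σ)) * angKer k σ 1 r) := by
      rw [angKer_scale k σ hn, angKer_symm k σ 1 r⁻¹]
      have := angKer_scale k σ hi0 r
      rw [inv_mul_cancel₀ hr0.ne'] at this
      rw [this]
    rw [indicator_of_mem (mem_Ioi.2 hr0), indicator_of_mem hr, radH, indicator_of_mem hmem, hang]
    have hS : symW α β (n * r⁻¹) n = n ^ (α + β) * (r ^ (-α) + r ^ (-β)) := by
      rw [symW, Real.mul_rpow hn.le hi0.le, Real.mul_rpow hn.le hi0.le, Real.rpow_add hn,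
        Real.inv_rpow hr0.le, Real.inv_rpow hr0.le, Real.rpow_neg hr0.le, Real.rpow_neg hr0.le]; ring
    have hD : difW γ p (n * r⁻¹) n = n ^ (-(γ * (p - 1))) * |1 - r ^ γ| ^ (p - 1) := by
      rw [difW, Real.mul_rpow hn.le hi0.le, Real.inv_rpow hr0.le, Real.rpow_neg hr0.le, inv_inv]
      have : n ^ (-γ) * r ^ γ - n ^ (-γ) = - (n ^ (-γ) * (1 - r ^ γ)) := by ring
      rw [this, abs_neg, abs_mul, abs_of_pos (Real.rpow_pos_of_pos hn _),
        Real.mul_rpow (by positivity) (by positivity), ← Real.rpow_mul hn.le]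
      ring_nf
    rw [hS, hD]
    simp only [← mul_assoc]
    congr 1
    rw [← ENNReal.ofReal_mul (by positivity), ← ENNReal.ofReal_mul (by positivity),
      ← ENNReal.ofReal_mul (by positivity), ← ENNReal.ofReal_mul (by positivity),
      ← ENNReal.ofReal_mul (by positivity), ← ENNReal.ofReal_mul (by positivity)]
    congr 1
    rw [← Real.rpow_natCast (n * r⁻¹), Nat.cast_sub hk, Real.mul_rpow hn.le hi0.le, rad0]
    push_cast
    have e1 : n ^ (α + β - σ - γ * (p - 1)) = n * n ^ (α+β) * n ^ (-(γ * (p-1))) *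
        n ^ ((k:ℝ) - 1) * n ^ (-(k:ℝ) - σ) := by
      nth_rewrite 2 [← Real.rpow_one n]
      rw [← Real.rpow_add hn, ← Real.rpow_add hn, ← Real.rpow_add hn, ← Real.rpow_add hn]
      congr 1; ring
    have e2 : (r ^ 2)⁻¹ * r⁻¹ ^ ((k:ℝ) - 1) * r⁻¹ ^ (-(k:ℝ) - σ) = r ^ (σ - 1) := by
      rw [Real.inv_rpow hr0.le, Real.inv_rpow hr0.le, ← Real.rpow_natCast r 2,
        ← Real.rpow_neg hr0.le, ← Real.rpow_neg hr0.le, ← Real.rpow_neg hr0.le,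
        ← Real.rpow_add hr0, ← Real.rpow_add hr0]
      congr 1; push_cast; ring
    rw [e1]
    linear_combination (n * n ^ (α+β) * n ^ (-(γ * (p-1))) *
        n ^ ((k:ℝ) - 1) * n ^ (-(k:ℝ) - σ)) * |1 - r ^ γ| ^ (p - 1) *
        (r ^ (-α) + r ^ (-β)) * e2
  · rw [indicator_of_notMem hr]
    by_cases hr0 : 0 < r
    · have hmem : (n * r⁻¹, n) ∉ coneR τ := by
        rintro ⟨-, -, h3⟩
        have h3 : n < τ * (n * r⁻¹) := h3
        rw [← mul_assoc, ← div_eq_mul_inv, lt_div_iff₀ hr0] at h3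
        exact hr ⟨hr0, by nlinarith⟩
      rw [indicator_of_mem (mem_Ioi.2 hr0), radH, indicator_of_notMem hmem]
      simp
    · rw [indicator_of_notMem (by simpa using hr0)]

lemma lintegral_rpow_lt_top {e : ℝ} (he : -1 < e) :
    ∫⁻ r in Ioo (0:ℝ) 1, ENNReal.ofReal (r ^ e) < ⊤ := by
  have := (intervalIntegral.integrableOn_Ioo_rpow_iff (s := e) one_pos).2 he
  refine lt_of_le_of_lt (lintegral_mono fun r => ?_) this.2
  exact Real.ofReal_le_enorm _

/-- A density which is dominated near the origin by integrable powers has finite integral against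
the angular kernel away from the singularity `r = 1`. -/
lemma rad_finite {k : ℕ} {σ τ e1 e2 : ℝ} (hσ : 0 < σ) (hτ : τ < 1) (h1 : -1 < e1) (h2 : -1 < e2)
    {f : ℝ → ℝ} (hf : ∀ r, 0 < r → r < 1 → f r ≤ r ^ e1 + r ^ e2) :
    ∫⁻ r in Ioo 0 τ, ENNReal.ofReal (f r) * angKer k σ 1 r ≠ ⊤ := by
  obtain ⟨M, hM, hb⟩ := angKer_bound k hσ (ε := 1 - τ) (by linarith)
  refine ne_top_of_le_ne_top (b := (∫⁻ r in Ioo (0:ℝ) 1, ENNReal.ofReal (r ^ e1) +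
      ENNReal.ofReal (r ^ e2)) * M) ?_ ?_
  · refine ENNReal.mul_ne_top ?_ hM
    rw [lintegral_add_left (by fun_prop)]
    exact ENNReal.add_ne_top.2 ⟨(lintegral_rpow_lt_top h1).ne, (lintegral_rpow_lt_top h2).ne⟩
  · rw [← lintegral_mul_const' _ _ hM]
    refine (lintegral_mono_set (t := Ioo (0:ℝ) τ) (le_refl _)).trans ?_
    refine le_trans ?_ (lintegral_mono_set (s := Ioo (0:ℝ) τ) (Ioo_subset_Ioo_right hτ.le))
    refine setLIntegral_mono' measurableSet_Ioo fun r hr => ?_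
    gcongr
    · rw [← ENNReal.ofReal_add (Real.rpow_nonneg hr.1.le _) (Real.rpow_nonneg hr.1.le _)]
      exact ENNReal.ofReal_le_ofReal (hf r hr.1 (hr.2.trans hτ))
    · exact hb r hr.1 (by linarith [hr.2])

/-- For `γ > 0` the linear term attached to the larger radius is finite after truncation. -/
lemma Q1_finite {k : ℕ} {σ p α β γ τ : ℝ} (hσ : 0 < σ) (hp : 1 < p) (hτ : τ < 1)
    (hα : α < σ) (hβ : β < σ) (hγ : 0 < γ) :
    ∫⁻ r in Ioo 0 τ, ENNReal.ofReal (r ^ γ * rad0 γ p σ α β r) * angKer k σ 1 r ≠ ⊤ := by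
  refine rad_finite hσ hτ (e1 := σ - 1 - α) (e2 := σ - 1 - β) (by linarith) (by linarith) ?_
  intro r h0 h1
  have a1 : r ^ γ ≤ 1 := Real.rpow_le_one h0.le h1.le hγ.le
  have a0 : 0 ≤ r ^ γ := Real.rpow_nonneg h0.le _
  have a2 : |1 - r ^ γ| ^ (p-1) ≤ 1 :=
    Real.rpow_le_one (abs_nonneg _) (by rw [abs_of_nonneg (by linarith)]; linarith) (by linarith)
  rw [sub_eq_add_neg _ α, sub_eq_add_neg _ β, Real.rpow_add h0, Real.rpow_add h0, ← mul_add, rad0]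
  calc _ ≤ 1 * (1 * r ^ (σ - 1) * (r ^ (-α) + r ^ (-β))) := by gcongr
    _ = _ := by ring

/-- For `γ < 0` the linear term attached to the smaller radius is finite after truncation. -/
lemma Q2_finite {k : ℕ} {σ p α β γ τ : ℝ} (hσ : 0 < σ) (hp : 1 < p) (hτ : τ < 1)
    (hα : -(k:ℝ) < α) (hβ : -(k:ℝ) < β) (hγp : γ * p = k + α + β - σ) (hγ : γ < 0) :
    ∫⁻ r in Ioo 0 τ, ENNReal.ofReal (rad0 γ p σ α β r) * angKer k σ 1 r ≠ ⊤ := by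
  refine rad_finite hσ hτ (e1 := k - 1 + β) (e2 := k - 1 + α) (by linarith) (by linarith) ?_
  intro r h0 h1
  have a1 : 1 ≤ r ^ γ := Real.one_le_rpow_of_pos_of_le_one_of_nonpos h0 h1.le hγ.le
  have a2 : |1 - r ^ γ| ^ (p-1) ≤ r ^ (γ * p) := by
    calc |1 - r ^ γ| ^ (p-1) ≤ (r ^ γ) ^ (p - 1) := by
          refine Real.rpow_le_rpow (abs_nonneg _) ?_ (by linarith)
          rw [abs_of_nonpos (by linarith)]; linarith
      _ = r ^ (γ * (p - 1)) := by rw [← Real.rpow_mul h0.le]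
      _ ≤ r ^ (γ * p) := Real.rpow_le_rpow_of_exponent_ge h0 h1.le (by nlinarith)
  calc rad0 γ p σ α β r ≤ r ^ (γ * p) * r ^ (σ - 1) * (r ^ (-α) + r ^ (-β)) := by
        unfold rad0; gcongr
    _ = _ := by
      rw [← Real.rpow_add h0, mul_add, ← Real.rpow_add h0, ← Real.rpow_add h0, hγp]
      congr 2 <;> ring

/-! ### Ground state inequality on truncated cones -/

/-- The remainder integrand `(v(x)^{⟨p/2⟩} - v(y)^{⟨p/2⟩})² W(x, y)`, in terms of `a = u(x)`,
`b = u(y)`, `n = |x_k|` and `ρ = |y_k|`. -/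
def remB (γ p a b n ρ : ℝ) : ℝ :=
  (frenchPow (n ^ γ * a) (p / 2) - frenchPow (ρ ^ γ * b) (p / 2)) ^ 2 *
    (min (n ^ (-γ)) (ρ ^ (-γ)) * max (n ^ (-γ)) (ρ ^ (-γ)) ^ (p - 1))

/-- `|a|^p n^{γ(p-1)}`, which is `w |v|^p` for `w = n^{-γ}` and `v = n^γ a`. -/
def gR (γ p a n : ℝ) : ℝ := |a| ^ p * n ^ (γ * (p - 1))

lemma remB_nonneg {γ p a b n ρ : ℝ} (hn : 0 ≤ n) (hρ : 0 ≤ ρ) : 0 ≤ remB γ p a b n ρ := by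
  unfold remB
  have h1 : 0 ≤ n ^ (-γ) := Real.rpow_nonneg hn _
  have h2 : 0 ≤ ρ ^ (-γ) := Real.rpow_nonneg hρ _
  have h3 : 0 ≤ min (n ^ (-γ)) (ρ ^ (-γ)) := le_min h1 h2
  have h4 : 0 ≤ max (n ^ (-γ)) (ρ ^ (-γ)) := le_max_of_le_left h1
  positivity

lemma gR_nonneg {γ p a n : ℝ} (hn : 0 ≤ n) : 0 ≤ gR γ p a n := by
  unfold gR; positivity

lemma remB_symm (γ p a b n ρ : ℝ) : remB γ p a b n ρ = remB γ p b a ρ n := by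
  unfold remB
  rw [min_comm, max_comm]
  ring

lemma gR_eq {γ p a n : ℝ} (hn : 0 < n) : n ^ (-γ) * |n ^ γ * a| ^ p = gR γ p a n := by
  rw [gR, abs_mul, abs_of_pos (Real.rpow_pos_of_pos hn _),
    Real.mul_rpow (by positivity) (abs_nonneg _), ← Real.rpow_mul hn.le, ← mul_assoc,
    ← Real.rpow_add hn, mul_comm]
  congr 2; ring

lemma cancel_w {γ a n : ℝ} (hn : 0 < n) : n ^ (-γ) * (n ^ γ * a) = a := by
  rw [← mul_assoc, ← Real.rpow_add hn]; simp

/-- Radial ground state inequality when the smaller radius carries the larger weight. -/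
lemma ptw_pos {γ p a b n ρ C : ℝ} (hγ : 0 < γ) (hρ : 0 < ρ) (hρn : ρ ≤ n) (hp1 : 1 < p) (hp2 : p < 2)
    (hC : C = (p-1)/p ∨ C = p*(p-1)/2) :
    C * remB γ p a b n ρ + difW γ p n ρ * gR γ p b ρ ≤ |a - b| ^ p + difW γ p n ρ * gR γ p a n := by
  have hn : 0 < n := hρ.trans_le hρn
  have hw : n ^ (-γ) ≤ ρ ^ (-γ) := Real.rpow_le_rpow_of_nonpos hρ hρn (by linarith)
  have h := pw_main (ρ ^ γ * b) (n ^ γ * a) (Real.rpow_pos_of_pos hn (-γ)) hw hp1 hp2 hC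
  rw [cancel_w hn, cancel_w hρ, gR_eq hn, gR_eq hρ] at h
  rw [remB, difW, min_eq_left hw, max_eq_right hw, abs_sub_comm (n ^ (-γ)),
    abs_of_nonneg (sub_nonneg.2 hw), abs_sub_comm a]
  linarith

/-- Counterpart of `ptw_pos` when the larger radius carries the larger weight. -/
lemma ptw_neg {γ p a b n ρ C : ℝ} (hγ : γ < 0) (hρ : 0 < ρ) (hρn : ρ ≤ n) (hp1 : 1 < p) (hp2 : p < 2)
    (hC : C = (p-1)/p ∨ C = p*(p-1)/2) :
    C * remB γ p a b n ρ + difW γ p n ρ * gR γ p a n ≤ |a - b| ^ p + difW γ p n ρ * gR γ p b ρ := by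
  have hn : 0 < n := hρ.trans_le hρn
  have hw : ρ ^ (-γ) ≤ n ^ (-γ) := Real.rpow_le_rpow hρ.le hρn (by linarith)
  have h := pw_main (n ^ γ * a) (ρ ^ γ * b) (Real.rpow_pos_of_pos hρ (-γ)) hw hp1 hp2 hC
  rw [cancel_w hn, cancel_w hρ, gR_eq hn, gR_eq hρ] at h
  rw [remB, difW, min_eq_right hw, max_eq_left hw,
    abs_of_nonneg (sub_nonneg.2 hw)]
  linarith

lemma measurable_sign : Measurable Real.sign := by
  unfold Real.sign
  exact Measurable.ite measurableSet_Iio measurable_const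
    (Measurable.ite measurableSet_Ioi measurable_const measurable_const)

lemma measurable_frenchPow (t : ℝ) : Measurable fun a => frenchPow a t := by
  unfold frenchPow
  have := measurable_sign
  fun_prop

/-- The symmetrised weight cut off to `coneR τ`. -/
def coneW (τ α β n ρ : ℝ) : ENNReal :=
  (coneR τ).indicator (fun q => ENNReal.ofReal (symW α β q.1 q.2)) (n, ρ)

lemma measurable_coneW (τ α β : ℝ) : Measurable fun q : ℝ × ℝ => coneW τ α β q.1 q.2 := by
  refine Measurable.indicator ?_ (measurableSet_coneR τ)
  unfold symW
  fun_prop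

lemma coneW_of_mem {τ α β n ρ : ℝ} (h : (n, ρ) ∈ coneR τ) :
    coneW τ α β n ρ = ENNReal.ofReal (symW α β n ρ) := by
  rw [coneW, indicator_of_mem h]

lemma coneW_of_notMem {τ α β n ρ : ℝ} (h : (n, ρ) ∉ coneR τ) : coneW τ α β n ρ = 0 := by
  rw [coneW, indicator_of_notMem h]

lemma radH_eq (τ α β γ p n ρ : ℝ) :
    radH τ α β γ p n ρ = coneW τ α β n ρ * ENNReal.ofReal (difW γ p n ρ) := by
  by_cases h : (n, ρ) ∈ coneR τ
  · rw [coneW_of_mem h, radH, indicator_of_mem h, ENNReal.ofReal_mul (symW_nonneg h.1.le h.2.1.le)]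
  · rw [coneW_of_notMem h, radH, indicator_of_notMem h, zero_mul]

lemma coneR_mono {τ τ' : ℝ} (h : τ ≤ τ') : coneR τ ⊆ coneR τ' := by
  rintro ⟨a, b⟩ ⟨h1, h2, h3⟩
  refine ⟨h1, h2, ?_⟩
  have h1 : 0 < a := h1
  have h3 : b < τ * a := h3
  show b < τ' * a
  nlinarith

lemma coneW_mono {τ τ' : ℝ} (h : τ ≤ τ') (α β n ρ : ℝ) : coneW τ α β n ρ ≤ coneW τ' α β n ρ := by
  unfold coneW
  exact indicator_le_indicator_of_subset (coneR_mono h) (fun _ => zero_le) _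

/-- Radii ratio cut-offs increasing to `1`. -/
def tauN (n : ℕ) : ℝ := 1 - 1 / ((n : ℝ) + 1)

lemma tauN_lt (n : ℕ) : tauN n < 1 := by
  have : (0:ℝ) < 1 / ((n : ℝ) + 1) := by positivity
  unfold tauN; linarith

lemma tauN_mono : Monotone tauN := fun a b h => by
  unfold tauN
  have : (a:ℝ) ≤ b := by exact_mod_cast h
  have : 1 / ((b:ℝ) + 1) ≤ 1 / ((a:ℝ) + 1) := by gcongr
  linarith

lemma tauN_tendsto : Tendsto tauN atTop (𝓝 1) := by
  unfold tauN
  simpa using (tendsto_one_div_add_atTop_nhds_zero_nat (𝕜 := ℝ)).const_sub 1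

lemma coneW_eventually (α β n ρ : ℝ) :
    ∀ᶠ i in atTop, coneW (tauN i) α β n ρ = coneW 1 α β n ρ := by
  by_cases h : (n, ρ) ∈ coneR 1
  · have h3 : ρ < 1 * n := h.2.2
    have : Tendsto (fun i => tauN i * n) atTop (𝓝 (1 * n)) := tauN_tendsto.mul_const n
    filter_upwards [this.eventually_const_lt h3] with i hi
    rw [coneW_of_mem h, coneW_of_mem ⟨h.1, h.2.1, hi⟩]
  · refine Eventually.of_forall fun i => ?_
    rw [coneW_of_notMem h, coneW_of_notMem fun h' => h (coneR_mono (tauN_lt i).le h')]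

/-- The density `|1 - r^γ|^p r^{σ-1} (r^{-α} + r^{-β})` of the Hardy constant. -/
def radD (γ p σ α β r : ℝ) : ℝ := |1 - r ^ γ| * rad0 γ p σ α β r

lemma lintegral_tauN_tendsto {F : ℝ → ENNReal} (hFm : Measurable F) :
    Tendsto (fun i => ∫⁻ r in Ioo 0 (tauN i), F r) atTop (𝓝 (∫⁻ r in Ioo (0:ℝ) 1, F r)) := by
  simp_rw [← lintegral_indicator measurableSet_Ioo]
  refine lintegral_tendsto_of_tendsto_of_monotone
    (fun i => (hFm.indicator measurableSet_Ioo).aemeasurable) ?_ ?_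
  · refine ae_of_all _ fun r i j hij => ?_
    exact indicator_le_indicator_of_subset (Ioo_subset_Ioo_right (tauN_mono hij))
      (fun _ => zero_le) _
  · refine ae_of_all _ fun r => tendsto_const_nhds.congr' ?_
    by_cases h : r < 1
    · filter_upwards [tauN_tendsto.eventually_const_lt h] with i hi
      simp [indicator, h, hi]
    · refine Eventually.of_forall fun i => ?_
      have : ¬ r < tauN i := fun h' => h (h'.trans (tauN_lt i))
      simp [indicator, h, this]

lemma measurable_angKer_one (k : ℕ) (σ : ℝ) : Measurable fun r => angKer k σ 1 r :=
  Measurable.comp (g := fun q : ℝ × ℝ => angKer k σ q.1 q.2) (f := fun r : ℝ => ((1 : ℝ), r))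
    (measurable_angKer k σ) measurable_prodMk_left

lemma measurable_radD (γ p σ α β : ℝ) : Measurable (radD γ p σ α β) := by
  have := measurable_rad0 γ p σ α β
  unfold radD; fun_prop

/-- The two truncated radial coefficients differ by the integral of `radD`; for `γ < 0` the one with
the factor `r^γ` is the larger. -/
lemma rad_balance_neg (k : ℕ) {γ p σ α β τ : ℝ} (hτ : τ < 1) (hγ : γ < 0) :
    ∫⁻ r in Ioo 0 τ, ENNReal.ofReal (r ^ γ * rad0 γ p σ α β r) * angKer k σ 1 r =
      (∫⁻ r in Ioo 0 τ, ENNReal.ofReal (rad0 γ p σ α β r) * angKer k σ 1 r) +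
      ∫⁻ r in Ioo 0 τ, ENNReal.ofReal (radD γ p σ α β r) * angKer k σ 1 r := by
  have hm : Measurable fun r : ℝ => ENNReal.ofReal (rad0 γ p σ α β r) * angKer k σ 1 r :=
    (measurable_rad0 γ p σ α β).ennreal_ofReal.mul (measurable_angKer_one k σ)
  rw [← lintegral_add_left hm]
  refine setLIntegral_congr_fun measurableSet_Ioo fun r hr => ?_
  have h0 := rad0_nonneg (γ := γ) (p := p) (σ := σ) (α := α) (β := β) hr.1.le
  have h1 : 1 ≤ r ^ γ :=
    Real.one_le_rpow_of_pos_of_le_one_of_nonpos hr.1 (hr.2.trans hτ).le hγ.le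
  rw [← add_mul, radD, ← ENNReal.ofReal_add h0 (by positivity), abs_of_nonpos (by linarith)]
  congr 2; ring

/-- Counterpart of `rad_balance_neg` for `γ > 0`, where the coefficient with the factor `r^γ` is the
smaller. -/
lemma rad_balance_pos (k : ℕ) {γ p σ α β τ : ℝ} (hτ : τ < 1) (hγ : 0 < γ) :
    ∫⁻ r in Ioo 0 τ, ENNReal.ofReal (rad0 γ p σ α β r) * angKer k σ 1 r =
      (∫⁻ r in Ioo 0 τ, ENNReal.ofReal (r ^ γ * rad0 γ p σ α β r) * angKer k σ 1 r) +
      ∫⁻ r in Ioo 0 τ, ENNReal.ofReal (radD γ p σ α β r) * angKer k σ 1 r := by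
  have hm : Measurable fun r : ℝ => r ^ γ * rad0 γ p σ α β r :=
    (measurable_id.pow_const γ).mul (measurable_rad0 γ p σ α β)
  have hm2 : Measurable fun r : ℝ => ENNReal.ofReal (r ^ γ * rad0 γ p σ α β r) * angKer k σ 1 r :=
    hm.ennreal_ofReal.mul (measurable_angKer_one k σ)
  rw [← lintegral_add_left hm2]
  refine setLIntegral_congr_fun measurableSet_Ioo fun r hr => ?_
  have h0 := rad0_nonneg (γ := γ) (p := p) (σ := σ) (α := α) (β := β) hr.1.le
  have h1 : r ^ γ ≤ 1 := Real.rpow_le_one hr.1.le (hr.2.trans hτ).le hγ.le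
  have h2 : 0 ≤ r ^ γ := Real.rpow_nonneg hr.1.le _
  rw [← add_mul, radD, ← ENNReal.ofReal_add (by positivity) (by positivity),
    abs_of_nonneg (by linarith)]
  congr 2; ring

section
variable {k m : ℕ}

local notation "XX" => EuclideanSpace ℝ (Fin (k + m))
local notation "NN" => pnorm (k + m) k

/-- The kernel `|x - y|^{-d-σ}` with `d = k + m`. -/
def KerE (σ : ℝ) (z : XX × XX) : ENNReal :=
  ENNReal.ofReal (‖z.1 - z.2‖ ^ (-((k + m : ℕ) : ℝ) - σ))

lemma measurable_KerE (σ : ℝ) : Measurable (KerE (k := k) (m := m) σ) := by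
  unfold KerE; fun_prop

/-- Integral of a function on the product against the kernel and the cut-off weight. -/
def Jint (τ σ α β : ℝ) (P : XX × XX → ENNReal) : ENNReal :=
  ∫⁻ z, coneW τ α β (NN z.1) (NN z.2) * KerE σ z * P z ∂(volume.prod volume)

lemma measurable_coneK (τ σ α β : ℝ) :
    Measurable fun z : XX × XX => coneW τ α β (NN z.1) (NN z.2) * KerE σ z := by
  have h1 : Measurable fun z : XX × XX => NN z.1 := (measurable_pnorm _ _).comp measurable_fst
  have h2 : Measurable fun z : XX × XX => NN z.2 := (measurable_pnorm _ _).comp measurable_snd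
  exact ((measurable_coneW τ α β).comp (h1.prodMk h2)).mul (measurable_KerE σ)

lemma Jint_mono {τ τ' : ℝ} (h : τ ≤ τ') (σ α β : ℝ) (P : XX × XX → ENNReal) :
    Jint τ σ α β P ≤ Jint τ' σ α β P := by
  refine lintegral_mono fun z => ?_
  gcongr
  exact coneW_mono h _ _ _ _

lemma Jint_tendsto (σ α β : ℝ) {P : XX × XX → ENNReal} (hP : Measurable P) :
    Tendsto (fun i => Jint (tauN i) σ α β P) atTop (𝓝 (Jint 1 σ α β P)) := by
  refine lintegral_tendsto_of_tendsto_of_monotone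
    (fun i => ((measurable_coneK _ σ α β).mul hP).aemeasurable) ?_ ?_
  · refine ae_of_all _ fun z i j hij => ?_
    dsimp only
    gcongr
    exact coneW_mono (tauN_mono hij) _ _ _ _
  · refine ae_of_all _ fun z => tendsto_const_nhds.congr' ?_
    filter_upwards [coneW_eventually α β (NN z.1) (NN z.2)] with i hi
    rw [hi]

/-- The weighted integral `∫ |u|^p |x_k|^e`. -/
def Iint (p e : ℝ) (u : XX → ℝ) : ENNReal := ∫⁻ x, ENNReal.ofReal (|u x| ^ p * NN x ^ e)

/-- The difference density `|u(x) - u(y)|^p`. -/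
def PA (p : ℝ) (u : XX → ℝ) (z : XX × XX) : ENNReal := ENNReal.ofReal (|u z.1 - u z.2| ^ p)

/-- The remainder density `remB` at the pair of points `z = (x, y)`. -/
def PB (γ p : ℝ) (u : XX → ℝ) (z : XX × XX) : ENNReal :=
  ENNReal.ofReal (remB γ p (u z.1) (u z.2) (NN z.1) (NN z.2))

lemma measurable_PA (p : ℝ) {u : XX → ℝ} (hu : Measurable u) : Measurable (PA p u) := by
  have h1 : Measurable fun z : XX × XX => u z.1 := hu.comp measurable_fst
  have h2 : Measurable fun z : XX × XX => u z.2 := hu.comp measurable_snd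
  unfold PA
  fun_prop

lemma measurable_PB (γ p : ℝ) {u : XX → ℝ} (hu : Measurable u) : Measurable (PB γ p u) := by
  have h1 : Measurable fun z : XX × XX => u z.1 := hu.comp measurable_fst
  have h2 : Measurable fun z : XX × XX => u z.2 := hu.comp measurable_snd
  have h3 : Measurable fun z : XX × XX => NN z.1 := (measurable_pnorm _ _).comp measurable_fst
  have h4 : Measurable fun z : XX × XX => NN z.2 := (measurable_pnorm _ _).comp measurable_snd
  have h5 : Measurable fun z : XX × XX => frenchPow (NN z.1 ^ γ * u z.1) (p / 2) :=
    (measurable_frenchPow (p/2)).comp ((h3.pow_const γ).mul h1)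
  have h6 : Measurable fun z : XX × XX => frenchPow (NN z.2 ^ γ * u z.2) (p / 2) :=
    (measurable_frenchPow (p/2)).comp ((h4.pow_const γ).mul h2)
  unfold PB remB
  fun_prop

lemma measurable_gu (γ p : ℝ) {u : XX → ℝ} (hu : Measurable u) :
    Measurable fun x => ENNReal.ofReal (gR γ p (u x) (NN x)) := by
  have := measurable_pnorm (k+m) k
  unfold gR
  fun_prop

/-- Collects the powers of `|x_k|` after the inner integration has been carried out. -/
lemma gu_integral (hk : 1 ≤ k) {γ p e : ℝ} {u : XX → ℝ} (hu : Measurable u) (c Q : ENNReal) :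
    ∫⁻ x, ENNReal.ofReal (gR γ p (u x) (NN x)) *
      (c * (ENNReal.ofReal (NN x ^ (e - γ * (p - 1))) * Q)) = c * Q * Iint p e u := by
  have hN := measurable_pnorm (k+m) k
  unfold Iint
  rw [← lintegral_const_mul _ (by fun_prop)]
  refine lintegral_congr_ae ?_
  filter_upwards [ae_pnorm_pos hk] with x hx
  have : ENNReal.ofReal (|u x| ^ p * NN x ^ e) = ENNReal.ofReal (gR γ p (u x) (NN x)) *
      ENNReal.ofReal (NN x ^ (e - γ * (p - 1))) := by
    rw [← ENNReal.ofReal_mul (gR_nonneg hx.le), gR, mul_assoc, ← Real.rpow_add hx]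
    congr 3; ring
  rw [this]; ring

/-- Exact value of the truncated linear term in `u(x)`, where `|x_k|` is the larger radius. -/
lemma light_fst (hk : 1 ≤ k) {τ σ p α β γ : ℝ} (hσ : 0 < σ) (hγ : γ * p = k + α + β - σ)
    {u : XX → ℝ} (hu : Measurable u) :
    Jint τ σ α β (fun z => ENNReal.ofReal (difW γ p (NN z.1) (NN z.2)) *
        ENNReal.ofReal (gR γ p (u z.1) (NN z.1))) =
      ENNReal.ofReal (cst k m σ) * (∫⁻ r in Ioo 0 τ, ENNReal.ofReal (r ^ γ * rad0 γ p σ α β r) *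
        angKer k σ 1 r) * Iint p (α + β - σ) u := by
  rw [← gu_integral hk (γ := γ) hu]
  have h := lintegral_dbl_fst (m := m) hk hσ (measurable_gu γ p hu) (measurable_radH τ α β γ p)
  refine (Eq.trans ?_ h).trans ?_
  · unfold Jint
    refine lintegral_congr fun z => ?_
    rw [radH_eq, KerE]; ring
  · refine lintegral_congr_ae ?_
    filter_upwards [ae_pnorm_pos hk] with x hx
    rw [radH_integral_fst hk hγ hx]

/-- Exact value of the truncated linear term in `u(y)`, where `|y_k|` is the smaller radius. -/
lemma light_snd (hk : 1 ≤ k) {τ σ p α β γ : ℝ} (hσ : 0 < σ)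
    {u : XX → ℝ} (hu : Measurable u) :
    Jint τ σ α β (fun z => ENNReal.ofReal (difW γ p (NN z.1) (NN z.2)) *
        ENNReal.ofReal (gR γ p (u z.2) (NN z.2))) =
      ENNReal.ofReal (cst k m σ) * (∫⁻ r in Ioo 0 τ, ENNReal.ofReal (rad0 γ p σ α β r) *
        angKer k σ 1 r) * Iint p (α + β - σ) u := by
  rw [← gu_integral hk (γ := γ) hu]
  have h := lintegral_dbl_snd (m := m) hk hσ (measurable_gu γ p hu) (measurable_radH τ α β γ p)
  refine (Eq.trans ?_ h).trans ?_
  · unfold Jint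
    refine lintegral_congr fun z => ?_
    rw [radH_eq, KerE]; ring
  · refine lintegral_congr_ae ?_
    filter_upwards [ae_pnorm_pos hk] with x hx
    rw [radH_integral_snd hk hx]

lemma Jint_add_const {τ σ α β : ℝ} {P Q : XX × XX → ENNReal} (hP : Measurable P) (c : ENNReal) :
    Jint τ σ α β (fun z => c * P z + Q z) = c * Jint τ σ α β P + Jint τ σ α β Q := by
  unfold Jint
  have h1 : Measurable fun z : XX × XX => coneW τ α β (NN z.1) (NN z.2) * KerE σ z * P z :=
    (measurable_coneK _ σ α β).mul hP
  rw [← lintegral_const_mul _ h1, ← lintegral_add_left (h1.const_mul c)]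
  refine lintegral_congr fun z => ?_
  ring

/-- A pointwise inequality is only needed where `0 < |y_k| ≤ |x_k|`. -/
lemma Jint_le {τ σ α β : ℝ} (hτ : τ ≤ 1) {P Q : XX × XX → ENNReal}
    (h : ∀ z : XX × XX, 0 < NN z.2 → NN z.2 ≤ NN z.1 → P z ≤ Q z) :
    Jint τ σ α β P ≤ Jint τ σ α β Q := by
  unfold Jint
  refine lintegral_mono fun z => ?_
  by_cases hz : (NN z.1, NN z.2) ∈ coneR τ
  · have hz3 : NN z.2 < τ * NN z.1 := hz.2.2
    have hz1 : 0 < NN z.1 := hz.1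
    gcongr
    exact h z hz.2.1 (by nlinarith)
  · rw [coneW_of_notMem hz]; simp

/-- The truncated inequality: integrate the pointwise one, evaluate both linear terms, and subtract
the finite one. -/
lemma core_trunc (hk : 1 ≤ k) {τ σ p α β γ C : ℝ} (hσ : 0 < σ) (hγp : γ * p = k + α + β - σ)
    (hτ : τ < 1) (hp1 : 1 < p) (hp2 : p < 2) (hC : C = (p-1)/p ∨ C = p*(p-1)/2) (hC0 : 0 ≤ C)
    (hγ : γ ≠ 0) (hα : α ∈ Ioo (-(k : ℝ)) σ) (hβ : β ∈ Ioo (-(k : ℝ)) σ)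
    {u : XX → ℝ} (hu : Measurable u) (hI : Iint p (α + β - σ) u ≠ ⊤) :
    ENNReal.ofReal C * Jint τ σ α β (PB γ p u) + ENNReal.ofReal (cst k m σ) *
      (∫⁻ r in Ioo 0 τ, ENNReal.ofReal (radD γ p σ α β r) * angKer k σ 1 r) *
        Iint p (α + β - σ) u ≤ Jint τ σ α β (PA p u) := by
  set D : XX × XX → ENNReal := fun z => ENNReal.ofReal (difW γ p (NN z.1) (NN z.2)) with hD
  have hAm := measurable_PA p hu
  have hBm := measurable_PB γ p hu
  have hF := light_fst hk (τ := τ) hσ hγp hu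
  have hS := light_snd hk (τ := τ) (p := p) (α := α) (β := β) (γ := γ) hσ hu
  set Q1 := ∫⁻ r in Ioo 0 τ, ENNReal.ofReal (r ^ γ * rad0 γ p σ α β r) * angKer k σ 1 r with hQ1
  set Q2 := ∫⁻ r in Ioo 0 τ, ENNReal.ofReal (rad0 γ p σ α β r) * angKer k σ 1 r with hQ2
  set Δ := ∫⁻ r in Ioo 0 τ, ENNReal.ofReal (radD γ p σ α β r) * angKer k σ 1 r with hΔ
  set I := Iint p (α + β - σ) u with hIdef
  set c := ENNReal.ofReal (cst k m σ) with hc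
  have hptw : ∀ {x y z w C : ℝ}, 0 ≤ C → 0 ≤ x → 0 ≤ y → 0 ≤ z → 0 ≤ w → ∀ {δ : ℝ}, 0 ≤ δ →
      C * x + δ * y ≤ z + δ * w → ENNReal.ofReal C * ENNReal.ofReal x +
        ENNReal.ofReal δ * ENNReal.ofReal y ≤ 1 * ENNReal.ofReal z + ENNReal.ofReal δ * ENNReal.ofReal w := by
    intro x y z w C hC hx hy hz hw δ hδ h
    rw [one_mul, ← ENNReal.ofReal_mul hC, ← ENNReal.ofReal_mul hδ, ← ENNReal.ofReal_mul hδ,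
      ← ENNReal.ofReal_add (by positivity) (by positivity),
      ← ENNReal.ofReal_add (by positivity) (by positivity)]
    exact ENNReal.ofReal_le_ofReal h
  rcases lt_or_gt_of_ne hγ with hγ | hγ
  · have hQ : Q1 = Q2 + Δ := rad_balance_neg k hτ hγ
    have hfin : c * Q2 * I ≠ ⊤ := ENNReal.mul_ne_top (ENNReal.mul_ne_top ENNReal.ofReal_ne_top
      (Q2_finite hσ hp1 hτ hα.1 hβ.1 hγp hγ)) hI
    have key := Jint_le (σ := σ) (α := α) (β := β) hτ.le (P := fun z => ENNReal.ofReal C * PB γ p u z +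
        D z * ENNReal.ofReal (gR γ p (u z.1) (NN z.1)))
        (Q := fun z => 1 * PA p u z + D z * ENNReal.ofReal (gR γ p (u z.2) (NN z.2))) (by
      intro z hz hz2
      exact hptw hC0 (remB_nonneg (pnorm_nonneg _ _ _) (pnorm_nonneg _ _ _))
        (gR_nonneg (pnorm_nonneg _ _ _)) (by positivity)
        (gR_nonneg (pnorm_nonneg _ _ _)) (difW_nonneg _ _ _ _) (ptw_neg hγ hz hz2 hp1 hp2 hC))
    rw [Jint_add_const hBm, Jint_add_const hAm, hF, hS, hQ, one_mul] at key
    rw [show ENNReal.ofReal C * Jint τ σ α β (PB γ p u) + c * (Q2 + Δ) * I =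
      (ENNReal.ofReal C * Jint τ σ α β (PB γ p u) + c * Δ * I) + c * Q2 * I by ring] at key
    exact (ENNReal.add_le_add_iff_right hfin).1 key
  · have hQ : Q2 = Q1 + Δ := rad_balance_pos k hτ hγ
    have hfin : c * Q1 * I ≠ ⊤ := ENNReal.mul_ne_top (ENNReal.mul_ne_top ENNReal.ofReal_ne_top
      (Q1_finite hσ hp1 hτ hα.2 hβ.2 hγ)) hI
    have key := Jint_le (σ := σ) (α := α) (β := β) hτ.le (P := fun z => ENNReal.ofReal C * PB γ p u z +
        D z * ENNReal.ofReal (gR γ p (u z.2) (NN z.2)))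
        (Q := fun z => 1 * PA p u z + D z * ENNReal.ofReal (gR γ p (u z.1) (NN z.1))) (by
      intro z hz hz2
      exact hptw hC0 (remB_nonneg (pnorm_nonneg _ _ _) (pnorm_nonneg _ _ _))
        (gR_nonneg (pnorm_nonneg _ _ _)) (by positivity)
        (gR_nonneg (pnorm_nonneg _ _ _)) (difW_nonneg _ _ _ _) (ptw_pos hγ hz hz2 hp1 hp2 hC))
    rw [Jint_add_const hBm, Jint_add_const hAm, hF, hS, hQ, one_mul] at key
    rw [show ENNReal.ofReal C * Jint τ σ α β (PB γ p u) + c * (Q1 + Δ) * I =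
      (ENNReal.ofReal C * Jint τ σ α β (PB γ p u) + c * Δ * I) + c * Q1 * I by ring] at key
    exact (ENNReal.add_le_add_iff_right hfin).1 key

/-- The truncation is removed by monotone convergence as `τ → 1`. -/
lemma core_ineq (hk : 1 ≤ k) {σ p α β γ C : ℝ} (hσ : 0 < σ) (hγp : γ * p = k + α + β - σ)
    (hp1 : 1 < p) (hp2 : p < 2) (hC : C = (p-1)/p ∨ C = p*(p-1)/2) (hC0 : 0 ≤ C)
    (hγ : γ ≠ 0) (hα : α ∈ Ioo (-(k : ℝ)) σ) (hβ : β ∈ Ioo (-(k : ℝ)) σ)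
    {u : XX → ℝ} (hu : Measurable u) (hI : Iint p (α + β - σ) u ≠ ⊤) :
    ENNReal.ofReal C * Jint 1 σ α β (PB γ p u) + ENNReal.ofReal (cst k m σ) *
      (∫⁻ r in Ioo (0:ℝ) 1, ENNReal.ofReal (radD γ p σ α β r) * angKer k σ 1 r) *
        Iint p (α + β - σ) u ≤ Jint 1 σ α β (PA p u) := by
  have hm : Measurable fun r : ℝ => ENNReal.ofReal (radD γ p σ α β r) * angKer k σ 1 r :=
    (measurable_radD γ p σ α β).ennreal_ofReal.mul (measurable_angKer_one k σ)
  have h1 := ENNReal.Tendsto.const_mul (a := ENNReal.ofReal C)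
    (Jint_tendsto σ α β (measurable_PB γ p hu)) (Or.inr ENNReal.ofReal_ne_top)
  have h2 := ENNReal.Tendsto.mul_const (b := Iint p (α + β - σ) u)
    (ENNReal.Tendsto.const_mul (a := ENNReal.ofReal (cst k m σ))
    (lintegral_tauN_tendsto hm) (Or.inr ENNReal.ofReal_ne_top)) (Or.inr hI)
  refine le_of_tendsto (h1.add h2) (Eventually.of_forall fun i => ?_)
  exact (core_trunc hk hσ hγp (tauN_lt i) hp1 hp2 hC hC0 hγ hα hβ hu hI).trans
    (Jint_mono (tauN_lt i).le _ _ _ _)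

end

/-! ### Symmetrisation and the constant -/

section
variable {k m : ℕ}

local notation "XX" => EuclideanSpace ℝ (Fin (k + m))
local notation "NN" => pnorm (k + m) k

/-- Integral of a function on the product against the kernel and the weight `|x_k|^α |y_k|^β`. -/
def Dint (σ α β : ℝ) (P : XX × XX → ENNReal) : ENNReal :=
  ∫⁻ z, ENNReal.ofReal (NN z.1 ^ α * NN z.2 ^ β) * KerE σ z * P z ∂(volume.prod volume)

/-- The weight `n^α ρ^β` restricted to `ρ < n`. -/
def halfW (α β : ℝ) (q : ℝ × ℝ) : ENNReal :=
  (coneR 1).indicator (fun q => ENNReal.ofReal (q.1 ^ α * q.2 ^ β)) q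

lemma measurable_halfW (α β : ℝ) : Measurable (halfW α β) := by
  refine Measurable.indicator ?_ (measurableSet_coneR 1)
  fun_prop

lemma coneW_eq_half (α β n ρ : ℝ) : coneW 1 α β n ρ = halfW α β (n, ρ) + halfW β α (n, ρ) := by
  by_cases h : (n, ρ) ∈ coneR 1
  · have h1 : 0 < n := h.1
    have h2 : 0 < ρ := h.2.1
    rw [coneW_of_mem h, halfW, halfW, indicator_of_mem h, indicator_of_mem h,
      ← ENNReal.ofReal_add (by positivity) (by positivity), symW]
  · rw [coneW_of_notMem h, halfW, halfW, indicator_of_notMem h, indicator_of_notMem h, add_zero]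

/-- The full weight is the sum of its parts on the two sides of the diagonal `n = ρ`. -/
lemma full_eq_half {α β n ρ : ℝ} (hn : 0 < n) (hρ : 0 < ρ) (hne : n ≠ ρ) :
    ENNReal.ofReal (n ^ α * ρ ^ β) = halfW α β (n, ρ) + halfW β α (ρ, n) := by
  rcases lt_or_gt_of_ne hne with h | h
  · have h1 : (ρ, n) ∈ coneR 1 := ⟨hρ, hn, by simpa using h⟩
    have h2 : (n, ρ) ∉ coneR 1 := fun h' => by
      have : ρ < 1 * n := h'.2.2
      linarith
    rw [halfW, halfW, indicator_of_mem h1, indicator_of_notMem h2, zero_add, mul_comm]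
  · have h1 : (n, ρ) ∈ coneR 1 := ⟨hn, hρ, by simpa using h⟩
    have h2 : (ρ, n) ∉ coneR 1 := fun h' => by
      have : n < 1 * ρ := h'.2.2
      linarith
    rw [halfW, halfW, indicator_of_mem h1, indicator_of_notMem h2, add_zero]

lemma KerE_swap (σ : ℝ) (z : XX × XX) : KerE σ z.swap = KerE σ z := by
  simp only [KerE, Prod.fst_swap, Prod.snd_swap]
  rw [norm_sub_rev]

/-- Unfolding the symmetrisation: for symmetric `P` only the region `|y_k| < |x_k|` matters. -/
lemma Dint_eq_Jint (hk : 1 ≤ k) (σ α β : ℝ) {P : XX × XX → ENNReal} (hP : Measurable P)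
    (hsymm : ∀ z, P z.swap = P z) : Dint σ α β P = Jint 1 σ α β P := by
  have h3 : Measurable fun z : XX × XX => NN z.1 := (measurable_pnorm _ _).comp measurable_fst
  have h4 : Measurable fun z : XX × XX => NN z.2 := (measurable_pnorm _ _).comp measurable_snd
  have hm : ∀ a b : ℝ, Measurable fun z : XX × XX => halfW a b (NN z.1, NN z.2) * KerE σ z * P z :=
    fun a b => (((measurable_halfW a b).comp (h3.prodMk h4)).mul (measurable_KerE σ)).mul hP
  have hpos : ∀ᵐ z : XX × XX ∂(volume.prod volume), 0 < NN z.1 ∧ 0 < NN z.2 :=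
    (Measure.quasiMeasurePreserving_fst.ae (ae_pnorm_pos hk)).and
      (Measure.quasiMeasurePreserving_snd.ae (ae_pnorm_pos hk))
  calc Dint σ α β P = ∫⁻ z, (halfW α β (NN z.1, NN z.2) * KerE σ z * P z +
        (fun w : XX × XX => halfW β α (NN w.1, NN w.2) * KerE σ w * P w) z.swap)
          ∂(volume.prod volume) := by
        refine lintegral_congr_ae ?_
        filter_upwards [hpos, ae_pnorm_ne hk] with z hz hne
        rw [full_eq_half hz.1 hz.2 hne]
        simp only [KerE_swap, hsymm, Prod.fst_swap, Prod.snd_swap]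
        ring
    _ = (∫⁻ z, halfW α β (NN z.1, NN z.2) * KerE σ z * P z ∂(volume.prod volume)) +
        ∫⁻ z, halfW β α (NN z.1, NN z.2) * KerE σ z * P z ∂(volume.prod volume) := by
        rw [lintegral_add_left (hm α β)]
        congr 1
        exact lintegral_prod_swap (fun w : XX × XX => halfW β α (NN w.1, NN w.2) * KerE σ w * P w)
    _ = Jint 1 σ α β P := by
        rw [← lintegral_add_left (hm α β), Jint]
        refine lintegral_congr fun z => ?_
        rw [coneW_eq_half]; ring

/-- Comparison of `𝒞` with the constant produced by the ground state representation; `≤` suffices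
and needs no convergence of the integral defining `𝒞₁`. -/
lemma CC_le (hk : 1 ≤ k) {s p α β γ : ℝ} (hσ : 0 < s * p) (hp1 : 1 < p)
    (hγ : γ = ((k:ℝ) + α + β - s * p) / p) :
    ENNReal.ofReal (CC (k + m) k s p α β) ≤ ENNReal.ofReal (cst k m (s * p)) *
      ∫⁻ r in Ioo (0:ℝ) 1, ENNReal.ofReal (radD γ p (s * p) α β r) * angKer k (s * p) 1 r := by
  have h1 : CC (k + m) k s p α β = cst k m (s * p) * C1 k s p α β := by
    rw [CC, cst]
    push_cast
    rw [add_sub_cancel_left]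
  rw [h1, ENNReal.ofReal_mul (cst_pos hk m hσ).le]
  gcongr
  unfold C1
  refine (ofReal_integral_le ?_).trans ?_
  · refine (ae_restrict_mem measurableSet_Ioo).mono fun r hr => ?_
    have h2 := (Phi_nonneg_and_le k hk (s := s) (p := p) hr.1 hr.2).1
    have h3 := hr.1
    show 0 ≤ _
    positivity
  · refine setLIntegral_mono' measurableSet_Ioo fun r hr => ?_
    have h3 := hr.1
    have h4 : radD γ p (s * p) α β r = r ^ (s * p - 1) * (r ^ (-α) + r ^ (-β)) *
      |1 - r ^ (((k : ℝ) + α + β - s * p) / p)| ^ p := by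
      rw [radD, rad0, hγ]
      have this : ∀ y : ℝ, |y| ^ p = |y| * |y| ^ (p - 1) := fun y => by
        nth_rewrite 1 [← sub_add_cancel p 1]
        rw [Real.rpow_add_one' (abs_nonneg _) (by linarith), mul_comm]
      rw [this]; ring
    rw [h4, ENNReal.ofReal_mul (by positivity)]
    gcongr
    exact (Phi_nonneg_and_le k hk hr.1 hr.2).2

/-- The Hardy inequality with remainder, between `ℝ≥0∞`-valued integrals. -/
lemma full_ineq (hk : 1 ≤ k) {s p α β γ C : ℝ} (hσ : 0 < s * p)
    (hγe : γ = ((k:ℝ) + α + β - s * p) / p)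
    (hp1 : 1 < p) (hp2 : p < 2) (hC : C = (p-1)/p ∨ C = p*(p-1)/2) (hC0 : 0 ≤ C)
    (hγ : γ ≠ 0) (hα : α ∈ Ioo (-(k : ℝ)) (s * p)) (hβ : β ∈ Ioo (-(k : ℝ)) (s * p))
    {u : XX → ℝ} (hu : Measurable u) (hI : Iint p (α + β - s * p) u ≠ ⊤) :
    ENNReal.ofReal C * Dint (s * p) α β (PB γ p u) + ENNReal.ofReal (CC (k + m) k s p α β) *
        Iint p (α + β - s * p) u ≤ Dint (s * p) α β (PA p u) := by
  rw [Dint_eq_Jint hk _ _ _ (measurable_PB γ p hu), Dint_eq_Jint hk _ _ _ (measurable_PA p hu)]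
  · have hγp : γ * p = k + α + β - s * p := by
      rw [hγe]; field_simp
    refine le_trans ?_ (core_ineq hk hσ hγp hp1 hp2 hC hC0 hγ hα hβ hu hI)
    gcongr
    exact CC_le hk hσ hp1 hγe
  · intro z
    simp only [PA, Prod.fst_swap, Prod.snd_swap]
    rw [abs_sub_comm]
  · intro z
    simp only [PB, Prod.fst_swap, Prod.snd_swap]
    rw [remB_symm]

end

/-! ### Local integrability of the weights -/

lemma rpow_pair_le {X Y b c : ℝ} (hX : 0 < X) (hY : 0 < Y) (hb : 0 ≤ b) (hc : 0 ≤ c) :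
    X ^ (-b) * Y ^ (-c) ≤ X ^ (-(b + c)) + Y ^ (-(b + c)) := by
  rcases le_total X Y with h | h
  · have : Y ^ (-c) ≤ X ^ (-c) := Real.rpow_le_rpow_of_nonpos hX h (by linarith)
    calc X ^ (-b) * Y ^ (-c) ≤ X ^ (-b) * X ^ (-c) := by gcongr
      _ = X ^ (-(b+c)) := by rw [← Real.rpow_add hX]; ring_nf
      _ ≤ _ := le_add_of_nonneg_right (by positivity)
  · have : X ^ (-b) ≤ Y ^ (-b) := Real.rpow_le_rpow_of_nonpos hY h (by linarith)
    calc X ^ (-b) * Y ^ (-c) ≤ Y ^ (-b) * Y ^ (-c) := by gcongr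
      _ = Y ^ (-(b+c)) := by rw [← Real.rpow_add hY]; ring_nf
      _ ≤ _ := le_add_of_nonneg_left (by positivity)

lemma rpow_split_le {X R t : ℝ} (hX : 0 < X) (hXR : X ≤ R) :
    X ^ t ≤ R ^ (max t 0) * X ^ (-(max (-t) 0)) := by
  have : t = max t 0 + -(max (-t) 0) := by
    rcases le_total t 0 with h | h
    · rw [max_eq_right h, max_eq_left (by linarith)]; ring
    · rw [max_eq_left h, max_eq_right (by linarith)]; ring
  nth_rewrite 1 [this]
  rw [Real.rpow_add hX]
  gcongr

/-- A negative power splits into a bounded part and a part supported near the origin. -/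
lemma rpow_neg_le_one_add {a n : ℝ} (ha : 0 ≤ a) :
    ENNReal.ofReal (n ^ (-a)) ≤ 1 + (Iio (1:ℝ)).indicator (fun n => ENNReal.ofReal (n ^ (-a))) n := by
  by_cases h : n < 1
  · rw [indicator_of_mem (mem_Iio.2 h)]; exact le_add_self
  · rw [indicator_of_notMem (by simpa using h), add_zero, ← ENNReal.ofReal_one]
    exact ENNReal.ofReal_le_ofReal (Real.rpow_le_one_of_one_le_of_nonpos (not_lt.1 h) (by linarith))

/-- `|b|^{-a}` is integrable over the unit ball of `ℝ^k` when `a < k`. -/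
lemma lintegral_norm_neg_finite {k : ℕ} (hk : 1 ≤ k) {a : ℝ} (ha : a < k) :
    ∫⁻ b : EuclideanSpace ℝ (Fin k),
      (Iio (1:ℝ)).indicator (fun n => ENNReal.ofReal (n ^ (-a))) ‖b‖ ≠ ⊤ := by
  obtain ⟨j, rfl⟩ := Nat.exists_eq_add_of_le' hk
  have hm : Measurable ((Iio (1:ℝ)).indicator (fun n : ℝ => ENNReal.ofReal (n ^ (-a)))) :=
    Measurable.indicator (by fun_prop) measurableSet_Iio
  rw [lintegral_fun_norm (n := j) (by simp) hm]
  refine ENNReal.mul_ne_top ENNReal.ofReal_ne_top ?_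
  have he : -1 < (j:ℝ) - a := by push_cast at ha; linarith
  refine ne_top_of_le_ne_top (lintegral_rpow_lt_top he).ne ?_
  rw [← lintegral_indicator measurableSet_Ioi, ← lintegral_indicator measurableSet_Ioo]
  refine lintegral_mono fun y => ?_
  by_cases h0 : 0 < y
  · by_cases h1 : y < 1
    · rw [indicator_of_mem (mem_Ioi.2 h0), indicator_of_mem (mem_Iio.2 h1),
        indicator_of_mem (mem_Ioo.2 ⟨h0, h1⟩), ← ENNReal.ofReal_mul (by positivity),
        ← Real.rpow_natCast, ← Real.rpow_add h0, sub_eq_add_neg]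
    · rw [indicator_of_mem (mem_Ioi.2 h0), indicator_of_notMem (s := Iio (1:ℝ)) (by simpa using h1)]
      simp
  · rw [indicator_of_notMem (by simpa using h0)]
    simp

section
variable {k m : ℕ}

local notation "XX" => EuclideanSpace ℝ (Fin (k + m))
local notation "NN" => pnorm (k + m) k

/-- Uniform local integrability of `|x_k|^{-a}` for `a < k`. -/
lemma uniform_loc (hk : 1 ≤ k) {a R : ℝ} (ha0 : 0 ≤ a) (ha : a < k) :
    ∃ M : ENNReal, M ≠ ⊤ ∧ ∀ h : XX,
      ∫⁻ x, (Metric.ball (0 : XX) R).indicator (fun _ => (1:ENNReal)) x *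
        ENNReal.ofReal (NN (x - h) ^ (-a)) ≤ M := by
  set J := ∫⁻ b : EuclideanSpace ℝ (Fin k),
      (Iio (1:ℝ)).indicator (fun n => ENNReal.ofReal (n ^ (-a))) ‖b‖ with hJ
  set iU : EuclideanSpace ℝ (Fin k) → ENNReal := (Metric.ball 0 R).indicator fun _ => 1 with hiU
  set iV : EuclideanSpace ℝ (Fin m) → ENNReal := (Metric.ball 0 R).indicator fun _ => 1 with hiV
  have hiUm : Measurable iU := measurable_const.indicator measurableSet_ball
  have hiVm : Measurable iV := measurable_const.indicator measurableSet_ball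
  have hm : Measurable ((Iio (1:ℝ)).indicator (fun n : ℝ => ENNReal.ofReal (n ^ (-a)))) :=
    Measurable.indicator (by fun_prop) measurableSet_Iio
  refine ⟨(volume (Metric.ball (0 : EuclideanSpace ℝ (Fin k)) R) + J) *
    volume (Metric.ball (0 : EuclideanSpace ℝ (Fin m)) R), ?_, fun h => ?_⟩
  · refine ENNReal.mul_ne_top (ENNReal.add_ne_top.2 ⟨measure_ball_lt_top.ne, ?_⟩)
      measure_ball_lt_top.ne
    exact lintegral_norm_neg_finite hk ha
  set b0 := (splitE k m h).fst with hb0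
  have hle : ∀ x : XX, (Metric.ball (0 : XX) R).indicator (fun _ => (1:ENNReal)) x *
        ENNReal.ofReal (NN (x - h) ^ (-a)) ≤
      iU (splitE k m x).fst * ENNReal.ofReal (‖(splitE k m x).fst - b0‖ ^ (-a)) *
        iV (splitE k m x).snd := by
    intro x
    by_cases hx : x ∈ Metric.ball (0 : XX) R
    · have hx' : ‖x‖ < R := by simpa using hx
      have h1 : ‖(splitE k m x).fst‖ ≤ ‖x‖ := by
        rw [← (splitE k m).norm_map x]; exact WithLp.norm_fst_le _ _
      have h2 : ‖(splitE k m x).snd‖ ≤ ‖x‖ := by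
        rw [← (splitE k m).norm_map x]; exact WithLp.norm_snd_le _ _
      rw [indicator_of_mem hx, hiU, hiV, indicator_of_mem (by simpa using h1.trans_lt hx'),
        indicator_of_mem (by simpa using h2.trans_lt hx'), ← norm_splitE_fst, map_sub,
        WithLp.sub_fst, mul_one]
    · rw [indicator_of_notMem hx, zero_mul]; exact zero_le
  refine (lintegral_mono hle).trans ?_
  rw [lintegral_split (splitE k m) (g := fun b w => iU b * ENNReal.ofReal (‖b - b0‖ ^ (-a)) * iV w)
    (by unfold Function.uncurry; fun_prop) (fun _ => rfl)]
  have hV : ∫⁻ w, iV w = volume (Metric.ball (0 : EuclideanSpace ℝ (Fin m)) R) := by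
    rw [hiV, lintegral_indicator measurableSet_ball]; simp
  have hU : ∫⁻ w, iU w = volume (Metric.ball (0 : EuclideanSpace ℝ (Fin k)) R) := by
    rw [hiU, lintegral_indicator measurableSet_ball]; simp
  simp_rw [lintegral_const_mul _ hiVm, hV]
  rw [lintegral_mul_const _ (by fun_prop)]
  gcongr
  calc ∫⁻ b, iU b * ENNReal.ofReal (‖b - b0‖ ^ (-a)) ≤ ∫⁻ b, (iU b +
        (fun c : EuclideanSpace ℝ (Fin k) =>
          (Iio (1:ℝ)).indicator (fun n => ENNReal.ofReal (n ^ (-a))) ‖c‖) (b - b0)) := by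
        refine lintegral_mono fun b => ?_
        have h1 : iU b ≤ 1 := indicator_le_self' (fun _ _ => zero_le) b |>.trans le_rfl
        calc _ ≤ iU b * (1 + (Iio (1:ℝ)).indicator (fun n => ENNReal.ofReal (n ^ (-a))) ‖b - b0‖) := by
              gcongr; exact rpow_neg_le_one_add ha0
          _ ≤ _ := by
              rw [mul_add, mul_one]
              gcongr
              exact mul_le_of_le_one_left zero_le h1
    _ = _ := by
        rw [lintegral_add_left hiUm, hU]
        congr 1
        exact lintegral_sub_right_eq_self (fun c : EuclideanSpace ℝ (Fin k) =>
          (Iio (1:ℝ)).indicator (fun n => ENNReal.ofReal (n ^ (-a))) ‖c‖) b0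

end

/-- Integrability over the increment `h = x - y`. -/
lemma lintegral_incr_finite {j : ℕ} {p σ R b : ℝ} (hR : 0 ≤ R) (hp : σ < p) (hb0 : 0 ≤ b)
    (hb : b < σ) :
    ∫⁻ h : EuclideanSpace ℝ (Fin (j + 1)),
      ENNReal.ofReal (min 1 ‖h‖ ^ p * ‖h‖ ^ (-((j + 1 : ℕ) : ℝ) - σ) * (R + ‖h‖) ^ b) ≠ ⊤ := by
  rw [lintegral_fun_norm (n := j) (f := fun y => ENNReal.ofReal (min 1 y ^ p *
    y ^ (-((j + 1 : ℕ) : ℝ) - σ) * (R + y) ^ b)) (by simp) (by fun_prop)]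
  refine ENNReal.mul_ne_top ENNReal.ofReal_ne_top ?_
  have h2 : IntegrableOn (fun y : ℝ => y ^ (-1 - σ + b)) (Ioi 1) :=
    integrableOn_Ioi_rpow_of_lt (by linarith) one_pos
  have f1 : ∫⁻ y in Ioo (0:ℝ) 1, ENNReal.ofReal ((R + 1) ^ b) * ENNReal.ofReal (y ^ (p - 1 - σ)) ≠ ⊤ := by
    rw [lintegral_const_mul _ (by fun_prop)]
    exact ENNReal.mul_ne_top ENNReal.ofReal_ne_top (lintegral_rpow_lt_top (by linarith)).ne
  have f2 : ∫⁻ y in Ioi (1:ℝ), ENNReal.ofReal ((R + 1) ^ b) * ENNReal.ofReal (y ^ (-1 - σ + b)) ≠ ⊤ := by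
    rw [lintegral_const_mul _ (by fun_prop)]
    refine ENNReal.mul_ne_top ENNReal.ofReal_ne_top (lt_of_le_of_lt (lintegral_mono fun r => ?_) h2.2).ne
    exact Real.ofReal_le_enorm _
  have hun : Ioi (0:ℝ) ⊆ Ioo 0 1 ∪ {1} ∪ Ioi 1 := by
    intro y hy
    rcases lt_trichotomy y 1 with h | h | h
    · exact Or.inl (Or.inl ⟨hy, h⟩)
    · exact Or.inl (Or.inr h)
    · exact Or.inr h
  refine ne_top_of_le_ne_top (ENNReal.add_ne_top.2 ⟨f1, f2⟩) ?_
  refine (lintegral_mono_set hun).trans ((lintegral_union_le _ _ _).trans ?_)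
  refine (add_le_add_left (lintegral_union_le _ _ _) _).trans ?_
  rw [setLIntegral_measure_zero {1} _ (by simp), add_zero]
  refine add_le_add ?_ ?_
  · refine setLIntegral_mono' measurableSet_Ioo fun y hy => ?_
    have hy0 := hy.1
    rw [← ENNReal.ofReal_mul (by positivity), ← ENNReal.ofReal_mul (by positivity)]
    refine ENNReal.ofReal_le_ofReal ?_
    rw [min_eq_right hy.2.le]
    have e : y ^ j * (y ^ p * y ^ (-((j + 1 : ℕ) : ℝ) - σ)) = y ^ (p - 1 - σ) := by
      rw [← Real.rpow_natCast, ← Real.rpow_add hy0, ← Real.rpow_add hy0]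
      congr 1; push_cast; ring
    rw [← mul_assoc, e, mul_comm]
    gcongr
    linarith [hy.2]
  · refine setLIntegral_mono' measurableSet_Ioi fun y hy => ?_
    have hy1 : 1 < y := hy
    have hy0 : 0 < y := one_pos.trans hy1
    rw [← ENNReal.ofReal_mul (by positivity), ← ENNReal.ofReal_mul (by positivity)]
    refine ENNReal.ofReal_le_ofReal ?_
    rw [min_eq_left hy1.le, Real.one_rpow, one_mul]
    have e : y ^ j * (y ^ (-((j + 1 : ℕ) : ℝ) - σ)) * y ^ b = y ^ (-1 - σ + b) := by
      rw [← Real.rpow_natCast, ← Real.rpow_add hy0, ← Real.rpow_add hy0]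
      congr 1; push_cast; ring
    rw [← e, ← mul_assoc, mul_left_comm, ← Real.mul_rpow (by positivity) hy0.le]
    gcongr
    nlinarith

/-! ### Finiteness of the energy -/

section
variable {k m : ℕ}

local notation "XX" => EuclideanSpace ℝ (Fin (k + m))
local notation "NN" => pnorm (k + m) k

lemma pnorm_le_norm (x : XX) : NN x ≤ ‖x‖ := by
  rw [← norm_splitE_fst, ← (splitE k m).norm_map x]; exact WithLp.norm_fst_le _ _

/-- Difference quotients of a compactly supported `C^1` function, localised. -/
lemma diff_bound {p : ℝ} (hp : 0 < p) {u : XX → ℝ} (hu : ContDiff ℝ 1 u) (hc : HasCompactSupport u) :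
    ∃ R K : ℝ, 0 < R ∧ 0 ≤ K ∧ (∀ x, R ≤ ‖x‖ → u x = 0) ∧ (∀ x, |u x| ^ p ≤ K) ∧
      ∀ x y, |u x - u y| ^ p ≤ K * min 1 ‖x - y‖ ^ p := by
  obtain ⟨L, hL⟩ := hu.lipschitzWith_of_hasCompactSupport hc one_ne_zero
  obtain ⟨M, hM⟩ := hu.continuous.bounded_above_of_compact_support hc
  obtain ⟨R, hR⟩ := hc.isCompact.isBounded.subset_ball (0 : XX)
  have hM0 : 0 ≤ M := (norm_nonneg _).trans (hM 0)
  set K0 : ℝ := 2 * M + L with hK0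
  have hL0 : (0:ℝ) ≤ L := L.2
  refine ⟨max R 1, K0 ^ p, by positivity, by positivity, ?_, ?_, ?_⟩
  · intro x hx
    by_contra h
    have := hR (subset_tsupport _ (Function.mem_support.2 h))
    rw [mem_ball_zero_iff] at this
    linarith [le_max_left R 1]
  · intro x
    have := hM x
    rw [Real.norm_eq_abs] at this
    gcongr
    linarith
  · intro x y
    have hmin : 0 ≤ min 1 ‖x - y‖ := le_min zero_le_one (norm_nonneg _)
    rw [← Real.mul_rpow (by positivity) hmin]
    refine Real.rpow_le_rpow (abs_nonneg _) ?_ hp.le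
    have h1 : |u x - u y| ≤ L * ‖x - y‖ := by
      have := hL.dist_le_mul x y
      rwa [Real.dist_eq, dist_eq_norm] at this
    have h2 : |u x - u y| ≤ 2 * M := by
      have a := hM x
      have b := hM y
      rw [Real.norm_eq_abs] at a b
      linarith [abs_sub (u x) (u y)]
    rcases le_total 1 ‖x - y‖ with h | h
    · rw [min_eq_left h]; linarith
    · rw [min_eq_right h]
      nlinarith [norm_nonneg (x - y)]

/-- Increment profile dominating the Gagliardo kernel against the weights. -/
def incr (p σ R b : ℝ) (h : XX) : ENNReal :=
  ENNReal.ofReal (min 1 ‖h‖ ^ p * ‖h‖ ^ (-((k + m : ℕ) : ℝ) - σ) * (R + ‖h‖) ^ b)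

/-- The half of the energy where the first point lies in a fixed ball. -/
lemma half_energy (hk : 1 ≤ k) {p σ α β R : ℝ} (hR : 0 < R) (hp : σ < p) (hσ : 0 < σ)
    (hα : α ∈ Ioo (-(k : ℝ)) σ) (hβ : β ∈ Ioo (-(k : ℝ)) σ) (hαβ : -(k : ℝ) < α + β) :
    ∫⁻ z : XX × XX, ENNReal.ofReal (NN z.1 ^ α * NN z.2 ^ β) * KerE σ z *
      ((Metric.ball (0 : XX) R).indicator (fun _ => 1) z.1 *
        ENNReal.ofReal (min 1 ‖z.1 - z.2‖ ^ p)) ∂(volume.prod volume) ≠ ⊤ := by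
  set a : ℝ := max (-α) 0 + max (-β) 0 with ha
  have ha0 : 0 ≤ a := by positivity
  have hak : a < k := by
    have hk0 : (0:ℝ) < k := by exact_mod_cast hk
    rw [ha]
    rcases max_cases (-α) 0 with h1 | h1 <;> rcases max_cases (-β) 0 with h2 | h2 <;>
      linarith [hα.1, hβ.1]
  set b : ℝ := max β 0 with hb
  have hb0 : 0 ≤ b := le_max_right _ _
  have hbσ : b < σ := max_lt hβ.2 hσ
  set iB : XX → ENNReal := (Metric.ball (0 : XX) R).indicator (fun _ => 1) with hiB
  have hiBm : Measurable iB := measurable_const.indicator measurableSet_ball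
  set w : XX → ENNReal := fun x => ENNReal.ofReal (NN x ^ (-a)) with hw
  have hN := measurable_pnorm (k+m) k
  have hwm : Measurable w := by simp only [hw]; fun_prop
  set G : XX → ENNReal := incr p σ R b with hG
  have hGm : Measurable G := by
    rw [hG]; unfold incr; fun_prop
  set c : ENNReal := ENNReal.ofReal (R ^ (max α 0)) with hc
  have hpos : ∀ᵐ z : XX × XX ∂(volume.prod volume), 0 < NN z.1 ∧ 0 < NN z.2 :=
    (Measure.quasiMeasurePreserving_fst.ae (ae_pnorm_pos hk)).and
      (Measure.quasiMeasurePreserving_snd.ae (ae_pnorm_pos hk))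
  obtain ⟨M, hM, hMb⟩ := uniform_loc (m := m) hk (R := R) ha0 hak
  have hGfin : ∫⁻ h, G h ≠ ⊤ := by
    obtain ⟨j, hj⟩ : ∃ j, k + m = j + 1 := ⟨k + m - 1, by omega⟩
    have := lintegral_incr_finite (j := j) hR.le hp hb0 hbσ
    rw [hG]
    unfold incr
    rw [hj]
    exact this
  have hbound : ∫⁻ z : XX × XX, ENNReal.ofReal (NN z.1 ^ α * NN z.2 ^ β) * KerE σ z *
      (iB z.1 * ENNReal.ofReal (min 1 ‖z.1 - z.2‖ ^ p)) ∂(volume.prod volume) ≤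
      ∫⁻ z : XX × XX, c * (iB z.1 * G (z.1 - z.2) * (w z.1 + w z.2)) ∂(volume.prod volume) := by
    refine lintegral_mono_ae ?_
    filter_upwards [hpos] with z hz
    by_cases hzB : z.1 ∈ Metric.ball (0 : XX) R
    · have hz1 : ‖z.1‖ < R := by simpa using hzB
      have hN1 : NN z.1 ≤ R := (pnorm_le_norm _).trans hz1.le
      have hN2 : NN z.2 ≤ R + ‖z.1 - z.2‖ := by
        refine (pnorm_le_norm _).trans ?_
        have := norm_sub_norm_le z.2 z.1
        rw [norm_sub_rev] at this
        linarith
      have e1 := rpow_split_le (t := α) hz.1 hN1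
      have e2 := rpow_split_le (t := β) hz.2 hN2
      have e3 := rpow_pair_le hz.1 hz.2 (le_max_right (-α) 0) (le_max_right (-β) 0)
      have hh : 0 ≤ min 1 ‖z.1 - z.2‖ := le_min zero_le_one (norm_nonneg _)
      have hz1p := hz.1
      have hz2p := hz.2
      simp only [hiB, indicator_of_mem hzB, hc, hw, hG, incr, KerE, one_mul]
      rw [← ENNReal.ofReal_add (by positivity) (by positivity),
        ← ENNReal.ofReal_mul (by positivity), ← ENNReal.ofReal_mul (by positivity),
        ← ENNReal.ofReal_mul (by positivity), ← ENNReal.ofReal_mul (by positivity)]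
      refine ENNReal.ofReal_le_ofReal ?_
      set kr := ‖z.1 - z.2‖ ^ (-((k + m : ℕ) : ℝ) - σ) with hkr
      have hkr0 : 0 ≤ kr := by positivity
      set mp := min 1 ‖z.1 - z.2‖ ^ p
      have hmp0 : 0 ≤ mp := by positivity
      calc NN z.1 ^ α * NN z.2 ^ β * kr * mp ≤
          (R ^ (max α 0) * NN z.1 ^ (-(max (-α) 0))) *
            ((R + ‖z.1 - z.2‖) ^ b * NN z.2 ^ (-(max (-β) 0))) * kr * mp := by gcongr
        _ = R ^ (max α 0) * (mp * kr * (R + ‖z.1 - z.2‖) ^ b) *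
            (NN z.1 ^ (-(max (-α) 0)) * NN z.2 ^ (-(max (-β) 0))) := by ring
        _ ≤ R ^ (max α 0) * (mp * kr * (R + ‖z.1 - z.2‖) ^ b) *
            (NN z.1 ^ (-a) + NN z.2 ^ (-a)) := by gcongr
        _ = _ := by ring
    · simp only [hiB, indicator_of_notMem hzB, zero_mul, mul_zero, le_refl]
  refine ne_top_of_le_ne_top ?_ hbound
  have hF : Measurable fun z : XX × XX => iB z.1 * G (z.1 - z.2) * (w z.1 + w z.2) :=
    ((hiBm.comp measurable_fst).mul (hGm.comp (measurable_fst.sub measurable_snd))).mul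
      ((hwm.comp measurable_fst).add (hwm.comp measurable_snd))
  rw [lintegral_const_mul _ hF]
  refine ENNReal.mul_ne_top ENNReal.ofReal_ne_top ?_
  rw [lintegral_prod _ hF.aemeasurable]
  have hsub : ∀ x : XX, ∫⁻ y, iB x * G (x - y) * (w x + w y) =
      ∫⁻ h, iB x * G h * (w x + w (x - h)) := by
    intro x
    rw [← lintegral_sub_left_eq_self (fun h => iB x * G h * (w x + w (x - h))) x]
    simp only [sub_sub_cancel]
  simp_rw [hsub]
  have hF2 : Measurable fun z : XX × XX => iB z.1 * G z.2 * (w z.1 + w (z.1 - z.2)) :=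
    ((hiBm.comp measurable_fst).mul (hGm.comp measurable_snd)).mul
      ((hwm.comp measurable_fst).add (hwm.comp (measurable_fst.sub measurable_snd)))
  rw [lintegral_lintegral_swap (f := fun x h => iB x * G h * (w x + w (x - h))) hF2.aemeasurable]
  have hin : ∀ h : XX, ∫⁻ x, iB x * G h * (w x + w (x - h)) ≤ G h * (M + M) := by
    intro h
    have h1 := hMb 0
    have h2 := hMb h
    simp only [sub_zero] at h1
    have hm1 : Measurable fun x : XX => iB x * w x := hiBm.mul hwm
    have hm2 : Measurable fun x : XX => iB x * w (x - h) :=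
      hiBm.mul (hwm.comp (measurable_id.sub_const h))
    have : ∀ x : XX, iB x * G h * (w x + w (x - h)) = G h * (iB x * w x + iB x * w (x - h)) :=
      fun x => by ring
    simp_rw [this]
    have hm3 : Measurable fun x : XX => iB x * w x + iB x * w (x - h) := hm1.add hm2
    rw [lintegral_const_mul _ hm3, lintegral_add_left hm1]
    gcongr
  refine ne_top_of_le_ne_top ?_ (lintegral_mono hin)
  rw [lintegral_mul_const _ hGm]
  exact ENNReal.mul_ne_top hGfin (ENNReal.add_ne_top.2 ⟨hM, hM⟩)

/-- If the support of `u` lies in a ball, then `u(x) - u(y)` vanishes unless one of the points lies in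
that ball, so `half_energy` applies to each of the two cases. -/
lemma energy_finite (hk : 1 ≤ k) {p σ α β : ℝ} (hp : σ < p) (hσ : 0 < σ)
    (hα : α ∈ Ioo (-(k : ℝ)) σ) (hβ : β ∈ Ioo (-(k : ℝ)) σ) (hαβ : -(k : ℝ) < α + β)
    {u : XX → ℝ} (hu : ContDiff ℝ 1 u) (hc : HasCompactSupport u) :
    Dint σ α β (PA p u) ≠ ⊤ := by
  obtain ⟨R, K, hR, hK, hsupp, -, hdiff⟩ := diff_bound (hσ.trans hp) hu hc
  have f1 := half_energy (m := m) hk hR hp hσ hα hβ hαβ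
  have f2 := half_energy (m := m) hk hR hp hσ hβ hα (by linarith)
  set iB : XX → ENNReal := (Metric.ball (0 : XX) R).indicator (fun _ => 1) with hiB
  set H : ℝ → ℝ → XX × XX → ENNReal := fun α β z =>
    ENNReal.ofReal (NN z.1 ^ α * NN z.2 ^ β) * KerE σ z *
      (iB z.1 * ENNReal.ofReal (min 1 ‖z.1 - z.2‖ ^ p)) with hH
  have hHm : ∀ α β, Measurable (H α β) := by
    intro α β
    have h3 : Measurable fun z : XX × XX => NN z.1 := (measurable_pnorm _ _).comp measurable_fst
    have h4 : Measurable fun z : XX × XX => NN z.2 := (measurable_pnorm _ _).comp measurable_snd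
    have h5 : Measurable fun z : XX × XX => iB z.1 :=
      (measurable_const.indicator measurableSet_ball).comp measurable_fst
    have h6 := measurable_KerE (k := k) (m := m) σ
    have h7 : Measurable fun z : XX × XX => ENNReal.ofReal (min 1 ‖z.1 - z.2‖ ^ p) := by
      fun_prop
    have h8 : Measurable fun z : XX × XX => ENNReal.ofReal (NN z.1 ^ α * NN z.2 ^ β) := by
      fun_prop
    exact (h8.mul h6).mul (h5.mul h7)
  have hle : Dint σ α β (PA p u) ≤ ∫⁻ z, ENNReal.ofReal K * (H α β z + H β α z.swap)
      ∂(volume.prod volume) := by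
    unfold Dint
    refine lintegral_mono fun z => ?_
    have hB : ENNReal.ofReal (|u z.1 - u z.2| ^ p) ≤ ENNReal.ofReal K *
        ((iB z.1 + iB z.2) * ENNReal.ofReal (min 1 ‖z.1 - z.2‖ ^ p)) := by
      have hb1 : ENNReal.ofReal (|u z.1 - u z.2| ^ p) ≤
          ENNReal.ofReal K * ENNReal.ofReal (min 1 ‖z.1 - z.2‖ ^ p) := by
        rw [← ENNReal.ofReal_mul hK]
        exact ENNReal.ofReal_le_ofReal (hdiff _ _)
      by_cases h1 : z.1 ∈ Metric.ball (0 : XX) R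
      · refine hb1.trans ?_
        gcongr
        refine le_mul_of_one_le_left zero_le ?_
        rw [hiB, indicator_of_mem h1]; exact le_self_add
      · by_cases h2 : z.2 ∈ Metric.ball (0 : XX) R
        · refine hb1.trans ?_
          gcongr
          refine le_mul_of_one_le_left zero_le ?_
          rw [hiB, indicator_of_mem h2]; exact le_add_self
        · rw [hsupp _ (by simpa using h1), hsupp _ (by simpa using h2), sub_zero, abs_zero,
            Real.zero_rpow (by linarith)]
          simp
    calc ENNReal.ofReal (NN z.1 ^ α * NN z.2 ^ β) * KerE σ z * PA p u z ≤
        ENNReal.ofReal (NN z.1 ^ α * NN z.2 ^ β) * KerE σ z * (ENNReal.ofReal K *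
        ((iB z.1 + iB z.2) * ENNReal.ofReal (min 1 ‖z.1 - z.2‖ ^ p))) := by gcongr; exact hB
      _ = _ := by
        simp only [hH, KerE_swap, Prod.fst_swap, Prod.snd_swap]
        rw [norm_sub_rev z.2 z.1, mul_comm (NN z.2 ^ β)]
        ring
  refine ne_top_of_le_ne_top ?_ hle
  have hs : ∫⁻ z : XX × XX, H β α z.swap ∂(volume.prod volume) =
      ∫⁻ z, H β α z ∂(volume.prod volume) := lintegral_prod_swap (H β α)
  rw [lintegral_const_mul' _ _ ENNReal.ofReal_ne_top, lintegral_add_left (hHm α β), hs]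
  exact ENNReal.mul_ne_top ENNReal.ofReal_ne_top (ENNReal.add_ne_top.2 ⟨f1, f2⟩)

/-- Either the weight is locally integrable, or `|x_k|` is bounded below on the support of `u`. -/
lemma Iint_finite (hk : 1 ≤ k) {p e : ℝ} (hp : 0 < p) {u : XX → ℝ} (hu : ContDiff ℝ 1 u)
    (hc : HasCompactSupport u)
    (h : (-(k : ℝ) < e ∧ e ≤ 0) ∨ ∀ x, NN x = 0 → x ∉ tsupport u) : Iint p e u ≠ ⊤ := by
  obtain ⟨R, K, hR, hK, hsupp, hbd, -⟩ := diff_bound hp hu hc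
  rcases h with ⟨h1, h2⟩ | h
  · obtain ⟨M, hM, hMb⟩ := uniform_loc (m := m) hk (a := -e) (R := R) (by linarith) (by linarith)
    have h3 := hMb 0
    simp only [sub_zero, neg_neg] at h3
    refine ne_top_of_le_ne_top (ENNReal.mul_ne_top (ENNReal.ofReal_ne_top (r := K)) hM) ?_
    refine le_trans ?_ (mul_le_mul_right h3 (ENNReal.ofReal K))
    rw [← lintegral_const_mul' _ _ ENNReal.ofReal_ne_top]
    refine lintegral_mono fun x => ?_
    by_cases hx : x ∈ Metric.ball (0 : XX) R
    · have := pnorm_nonneg (k+m) k x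
      rw [indicator_of_mem hx, one_mul, ← ENNReal.ofReal_mul hK]
      refine ENNReal.ofReal_le_ofReal ?_
      gcongr
      exact hbd x
    · rw [hsupp _ (by simpa using hx), abs_zero, Real.zero_rpow hp.ne']
      simp
  · have hcont : ContinuousOn (fun x => |u x| ^ p * NN x ^ e) (tsupport u) := by
      refine ContinuousOn.mul ?_ ?_
      · exact (hu.continuous.abs.rpow_const fun x => Or.inr hp.le).continuousOn
      · exact (continuous_pnorm _ _).continuousOn.rpow_const fun x hx =>
          Or.inl fun h0 => h x h0 hx
    obtain ⟨B, hB⟩ := hc.isCompact.exists_bound_of_continuousOn hcont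
    have hfin : volume (tsupport u) ≠ ⊤ := hc.isCompact.measure_lt_top.ne
    refine ne_top_of_le_ne_top (ENNReal.mul_ne_top (ENNReal.ofReal_ne_top (r := B)) hfin) ?_
    rw [← setLIntegral_const, ← lintegral_indicator (isClosed_tsupport u).measurableSet]
    refine lintegral_mono fun x => ?_
    by_cases hx : x ∈ tsupport u
    · rw [indicator_of_mem hx]
      exact ENNReal.ofReal_le_ofReal ((le_abs_self _).trans (hB x hx))
    · rw [image_eq_zero_of_notMem_tsupport hx, abs_zero, Real.zero_rpow hp.ne']
      simp

end

/-! ### Conclusion -/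

/-- An iterated Bochner integral of a nonnegative function equals its `ℝ≥0∞`-valued double integral
once the latter is finite. -/
lemma integral_integral_eq_toReal {E : Type*} [MeasureSpace E] [SFinite (volume : Measure E)]
    {F : E → E → ℝ} (hF : Measurable fun z : E × E => F z.1 z.2) (h0 : ∀ x y, 0 ≤ F x y)
    {L : ENNReal} (hL : ∫⁻ z : E × E, ENNReal.ofReal (F z.1 z.2) ∂(volume.prod volume) = L)
    (hfin : L ≠ ⊤) : ∫ x, ∫ y, F x y = L.toReal := by
  have hInt : Integrable (fun z : E × E => F z.1 z.2)
      ((volume : Measure E).prod (volume : Measure E)) := by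
    refine ⟨hF.aestronglyMeasurable, ?_⟩
    rw [hasFiniteIntegral_iff_ofReal (Filter.Eventually.of_forall fun z => h0 _ _), hL]
    exact hfin.lt_top
  rw [← hL, ← integral_eq_lintegral_of_nonneg_ae (Filter.Eventually.of_forall fun z => h0 _ _)
    hF.aestronglyMeasurable]
  exact (integral_prod _ hInt).symm

/-- **Sharp weighted fractional Hardy inequality with remainder, `1 < p < 2`** (Theorem 3). -/
theorem weighted_fractional_hardy_remainder_p_lt_two
    (d k : ℕ) (s p α β : ℝ)
    (hd : 1 ≤ d) (hp1 : 1 < p) (hp2 : p < 2) (hs : s ∈ Ioo (0 : ℝ) 1)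
    (hk : 1 ≤ k) (hkd : k ≤ d)
    (hα : α ∈ Ioo (-(k : ℝ)) (s * p)) (hβ : β ∈ Ioo (-(k : ℝ)) (s * p))
    (hαβ : α + β ∈ Ioo (-(k : ℝ)) (s * p))
    (u : EuclideanSpace ℝ (Fin d) → ℝ)
    (hu : ContDiff ℝ 1 u) (husupp : HasCompactSupport u)
    (hcase : s * p < k + α + β ∨
      (k + α + β < s * p ∧ ∀ x, pnorm d k x = 0 → x ∉ tsupport u))
    (v : EuclideanSpace ℝ (Fin d) → ℝ)
    (hv : ∀ x, v x = pnorm d k x ^ (((k : ℝ) + α + β - s * p) / p) * u x)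
    (W : EuclideanSpace ℝ (Fin d) → EuclideanSpace ℝ (Fin d) → ℝ)
    (hW : ∀ x y, W x y =
      min (pnorm d k x ^ (-(((k : ℝ) + α + β - s * p) / p)))
          (pnorm d k y ^ (-(((k : ℝ) + α + β - s * p) / p))) *
        max (pnorm d k x ^ (-(((k : ℝ) + α + β - s * p) / p)))
            (pnorm d k y ^ (-(((k : ℝ) + α + β - s * p) / p))) ^ (p - 1)) :
    (∫ x, ∫ y, |u x - u y| ^ p * ‖x - y‖ ^ (-(d : ℝ) - s * p)
        * pnorm d k x ^ α * pnorm d k y ^ β)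
      - CC d k s p α β * ∫ x, |u x| ^ p * pnorm d k x ^ (α + β - s * p) ≥
      max ((p - 1) / p) (p * (p - 1) / 2) *
        ∫ x, ∫ y, (frenchPow (v x) (p / 2) - frenchPow (v y) (p / 2)) ^ 2
          * ‖x - y‖ ^ (-(d : ℝ) - s * p) * W x y
          * pnorm d k x ^ α * pnorm d k y ^ β := by
  obtain ⟨m, rfl⟩ := Nat.exists_eq_add_of_le hkd
  have hp0 : 0 < p := by linarith
  have hσ : 0 < s * p := mul_pos hs.1 hp0
  have hσp : s * p < p := by nlinarith [hs.2]
  set C := max ((p - 1) / p) (p * (p - 1) / 2) with hCdef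
  have hC : C = (p - 1) / p ∨ C = p * (p - 1) / 2 := max_choice _ _
  have hC0 : 0 < C := lt_max_of_lt_left (div_pos (by linarith) hp0)
  set γ := ((k : ℝ) + α + β - s * p) / p with hγe
  have hγ : γ ≠ 0 := by
    refine div_ne_zero ?_ hp0.ne'
    rcases hcase with h | h
    · exact (by linarith : (0 : ℝ) < k + α + β - s * p).ne'
    · exact (by linarith [h.1] : (k : ℝ) + α + β - s * p < 0).ne
  have hI : Iint p (α + β - s * p) u ≠ ⊤ := by
    refine Iint_finite hk hp0 hu husupp ?_
    rcases hcase with h | h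
    · left; constructor <;> linarith [hαβ.2]
    · exact Or.inr h.2
  have hum : Measurable u := hu.continuous.measurable
  have hA : Dint (s * p) α β (PA p u) ≠ ⊤ :=
    energy_finite hk hσp hσ hα hβ hαβ.1 hu husupp
  have hmain := full_ineq hk hσ hγe hp1 hp2 hC hC0.le hγ hα hβ hum hI
  have hB : Dint (s * p) α β (PB γ p u) ≠ ⊤ := by
    intro h
    rw [h, ENNReal.mul_top (by simpa using hC0), top_add] at hmain
    exact hA (top_le_iff.1 hmain)
  have hN := measurable_pnorm (k + m) k
  have hN1 : Measurable fun z : EuclideanSpace ℝ (Fin (k + m)) × EuclideanSpace ℝ (Fin (k + m)) =>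
      pnorm (k + m) k z.1 := hN.comp measurable_fst
  have hN2 : Measurable fun z : EuclideanSpace ℝ (Fin (k + m)) × EuclideanSpace ℝ (Fin (k + m)) =>
      pnorm (k + m) k z.2 := hN.comp measurable_snd
  have hN0 := pnorm_nonneg (k + m) k
  have hu1 : Measurable fun z : EuclideanSpace ℝ (Fin (k + m)) × EuclideanSpace ℝ (Fin (k + m)) =>
      u z.1 := hum.comp measurable_fst
  have hu2 : Measurable fun z : EuclideanSpace ℝ (Fin (k + m)) × EuclideanSpace ℝ (Fin (k + m)) =>
      u z.2 := hum.comp measurable_snd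
  have e1 : ∫ x, ∫ y, |u x - u y| ^ p * ‖x - y‖ ^ (-((k + m : ℕ) : ℝ) - s * p)
      * pnorm (k + m) k x ^ α * pnorm (k + m) k y ^ β = (Dint (s * p) α β (PA p u)).toReal := by
    refine integral_integral_eq_toReal (by fun_prop) (fun x y => ?_) ?_ hA
    · have := hN0 x
      have := hN0 y
      positivity
    · refine lintegral_congr fun z => ?_
      have h1 := hN0 z.1
      have h2 := hN0 z.2
      simp only [PA, KerE]
      rw [← ENNReal.ofReal_mul (by positivity), ← ENNReal.ofReal_mul (by positivity)]
      congr 1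
      ring
  have e2 : ∫ x, ∫ y, (frenchPow (v x) (p / 2) - frenchPow (v y) (p / 2)) ^ 2
      * ‖x - y‖ ^ (-((k + m : ℕ) : ℝ) - s * p) * W x y
      * pnorm (k + m) k x ^ α * pnorm (k + m) k y ^ β =
      (Dint (s * p) α β (PB γ p u)).toReal := by
    have hre : ∀ x y, (frenchPow (v x) (p / 2) - frenchPow (v y) (p / 2)) ^ 2
        * ‖x - y‖ ^ (-((k + m : ℕ) : ℝ) - s * p) * W x y
        * pnorm (k + m) k x ^ α * pnorm (k + m) k y ^ β =
        pnorm (k + m) k x ^ α * pnorm (k + m) k y ^ β *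
        ‖x - y‖ ^ (-((k + m : ℕ) : ℝ) - s * p) *
        remB γ p (u x) (u y) (pnorm (k + m) k x) (pnorm (k + m) k y) := by
      intro x y
      rw [hv, hv, hW]
      unfold remB
      ring
    have hBm : Measurable fun z :
        EuclideanSpace ℝ (Fin (k + m)) × EuclideanSpace ℝ (Fin (k + m)) =>
        remB γ p (u z.1) (u z.2) (pnorm (k + m) k z.1) (pnorm (k + m) k z.2) := by
      have hf := measurable_frenchPow (p / 2)
      unfold remB
      fun_prop
    simp only [hre]
    refine integral_integral_eq_toReal (by fun_prop) (fun x y => ?_) ?_ hB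
    · have h1 := hN0 x
      have h2 := hN0 y
      have := remB_nonneg (γ := γ) (p := p) (a := u x) (b := u y) h1 h2
      positivity
    · refine lintegral_congr fun z => ?_
      have h1 := hN0 z.1
      have h2 := hN0 z.2
      simp only [PB, KerE]
      rw [← ENNReal.ofReal_mul (by positivity), ← ENNReal.ofReal_mul (by positivity)]
  have e3 : ∫ x, |u x| ^ p * pnorm (k + m) k x ^ (α + β - s * p) =
      (Iint p (α + β - s * p) u).toReal := by
    have hm : Measurable fun x => |u x| ^ p * pnorm (k + m) k x ^ (α + β - s * p) := by fun_prop
    refine integral_eq_lintegral_of_nonneg_ae (Filter.Eventually.of_forall fun x => ?_)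
      hm.aestronglyMeasurable
    have := hN0 x
    simp only [Pi.zero_apply]
    positivity
  rw [e1, e2, e3, ge_iff_le]
  have h := ENNReal.toReal_mono hA hmain
  rw [ENNReal.toReal_add (ENNReal.mul_ne_top ENNReal.ofReal_ne_top hB)
    (ENNReal.mul_ne_top ENNReal.ofReal_ne_top hI), ENNReal.toReal_mul, ENNReal.toReal_mul,
    ENNReal.toReal_ofReal hC0.le, ENNReal.toReal_ofReal'] at h
  -- `ENNReal.ofReal` clips a negative constant to `0`, which only strengthens the bound.
  have h2 : CC (k + m) k s p α β * (Iint p (α + β - s * p) u).toReal ≤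
      max (CC (k + m) k s p α β) 0 * (Iint p (α + β - s * p) u).toReal :=
    mul_le_mul_of_nonneg_right (le_max_left _ _) ENNReal.toReal_nonneg
  linarith
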